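/- Let m ≥ 1 and let n₀ : ℝ^m → ℝ and v₀ : ℝ^m → ℝ^m be real-analytic functions that are ℤ^m-periodic (i.e., invariant under translation by every vector of ℤ^m). Then there exist ε > 0 and functions n : (−ε,ε) × ℝ^m → ℝ, v : (−ε,ε) × ℝ^m → ℝ^m and φ : (−ε,ε) × ℝ^m → ℝ, each real-analytic jointly in (t,x) and ℤ^m-periodic in x, such that for all (t,x): ∂ₜn + div(n·v) = 0, ∂ₜv + (v·∇)v + grad φ = 0, and Δφ − φ + n = 0, with n(0,·) = n₀ and v(0,·) = v₀; moreover the pair (n,v) is unique among such real-analytic solutions. -/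

import Mathlib

/-- The property of being a real-analytic, `ℤ^m`-periodic-in-space solution
`(n, v, φ)` of the (local form of the) modified Euler–Poisson system on the time
interval `(−ε, ε)`, with initial data `(n₀, v₀)`.  Here the time derivative of a
function `f` on `ℝ × ℝ^m` is `fderiv ℝ f p (1, 0)`, the `i`-th spatial partial
derivative is `fderiv ℝ f p (0, EuclideanSpace.single i 1)`, and `(v·∇)` acts in
the direction `(0, v p)`. -/
def IsAnalyticMEPSolution (m : ℕ) (ε : ℝ)
    (n₀ : EuclideanSpace ℝ (Fin m) → ℝ)
    (v₀ : EuclideanSpace ℝ (Fin m) → EuclideanSpace ℝ (Fin m))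
    (n φ : ℝ × EuclideanSpace ℝ (Fin m) → ℝ)
    (v : ℝ × EuclideanSpace ℝ (Fin m) → EuclideanSpace ℝ (Fin m)) : Prop :=
  -- joint real-analyticity in (t, x) on (−ε, ε) × ℝ^m
  (∀ p : ℝ × EuclideanSpace ℝ (Fin m), p.1 ∈ Set.Ioo (-ε) ε →
      AnalyticAt ℝ n p ∧ AnalyticAt ℝ v p ∧ AnalyticAt ℝ φ p) ∧
  -- ℤ^m-periodicity in the space variable
  (∀ (t : ℝ) (x : EuclideanSpace ℝ (Fin m)) (z : Fin m → ℤ),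
      n (t, x + (WithLp.equiv 2 (Fin m → ℝ)).symm fun i => (z i : ℝ)) = n (t, x) ∧
      v (t, x + (WithLp.equiv 2 (Fin m → ℝ)).symm fun i => (z i : ℝ)) = v (t, x) ∧
      φ (t, x + (WithLp.equiv 2 (Fin m → ℝ)).symm fun i => (z i : ℝ)) = φ (t, x)) ∧
  -- ∂ₜ n + div (n v) = 0
  (∀ p : ℝ × EuclideanSpace ℝ (Fin m), p.1 ∈ Set.Ioo (-ε) ε →
      fderiv ℝ n p (1, 0) +
        ∑ i : Fin m, fderiv ℝ (fun q => n q * v q i) p (0, EuclideanSpace.single i 1) = 0) ∧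
  -- ∂ₜ v + (v·∇)v + grad φ = 0 (componentwise)
  (∀ p : ℝ × EuclideanSpace ℝ (Fin m), p.1 ∈ Set.Ioo (-ε) ε → ∀ j : Fin m,
      fderiv ℝ (fun q => v q j) p (1, 0) +
        fderiv ℝ (fun q => v q j) p ((0 : ℝ), v p) +
        fderiv ℝ φ p (0, EuclideanSpace.single j 1) = 0) ∧
  -- Δφ − φ + n = 0
  (∀ p : ℝ × EuclideanSpace ℝ (Fin m), p.1 ∈ Set.Ioo (-ε) ε →
      (∑ i : Fin m,
          fderiv ℝ (fun q => fderiv ℝ φ q (0, EuclideanSpace.single i 1)) p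
            (0, EuclideanSpace.single i 1)) - φ p + n p = 0) ∧
  -- initial data
  (∀ x : EuclideanSpace ℝ (Fin m), n (0, x) = n₀ x ∧ v (0, x) = v₀ x)

namespace MEP
open scoped ENNReal BigOperators
open Finset

/-! ## Part A : weighted coefficient sequences -/

variable {m : ℕ}

/-- the `ℓ¹` size of a frequency -/
noncomputable def wt (ξ : Fin m → ℤ) : ℝ := ∑ j, |(ξ j : ℝ)|

lemma wt_nonneg (ξ : Fin m → ℤ) : 0 ≤ wt ξ := Finset.sum_nonneg fun _ _ => abs_nonneg _

lemma wt_add_le (ξ η : Fin m → ℤ) : wt (ξ + η) ≤ wt ξ + wt η := by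
  unfold wt
  rw [← Finset.sum_add_distrib]
  refine Finset.sum_le_sum fun j _ => ?_
  simpa using abs_add_le (ξ j : ℝ) (η j : ℝ)

lemma abs_le_wt (ξ : Fin m → ℤ) (j : Fin m) : |(ξ j : ℝ)| ≤ wt ξ :=
  Finset.single_le_sum (f := fun j => |(ξ j : ℝ)|) (fun _ _ => abs_nonneg _) (Finset.mem_univ j)

/-- exponential weight -/
noncomputable def ew (s : ℝ) (ξ : Fin m → ℤ) : ℝ≥0∞ := ENNReal.ofReal (Real.exp (s * wt ξ))

lemma ew_sub_le {s : ℝ} (hs : 0 ≤ s) (ξ η : Fin m → ℤ) :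
    ew s ξ ≤ ew s η * ew s (ξ - η) := by
  unfold ew
  rw [← ENNReal.ofReal_mul (Real.exp_pos _).le, ← Real.exp_add]
  refine ENNReal.ofReal_le_ofReal (Real.exp_le_exp.2 ?_)
  rw [← mul_add]
  refine mul_le_mul_of_nonneg_left ?_ hs
  simpa using wt_add_le η (ξ - η)

/-- weighted `ℓ¹` norm -/
noncomputable def N (s : ℝ) (a : (Fin m → ℤ) → ℂ) : ℝ≥0∞ := ∑' ξ, ‖a ξ‖ₑ * ew s ξ

/-- convolution -/
noncomputable def conv (a b : (Fin m → ℤ) → ℂ) : (Fin m → ℤ) → ℂ :=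
  fun ξ => ∑' η, a η * b (ξ - η)

lemma N_conv_le {s : ℝ} (hs : 0 ≤ s) (a b : (Fin m → ℤ) → ℂ) :
    N s (conv a b) ≤ N s a * N s b := by
  unfold N conv
  calc ∑' ξ, ‖∑' η, a η * b (ξ - η)‖ₑ * ew s ξ
      ≤ ∑' ξ, ∑' η, (‖a η‖ₑ * ew s η) * (‖b (ξ - η)‖ₑ * ew s (ξ - η)) := by
        refine ENNReal.tsum_le_tsum fun ξ => ?_
        refine (mul_le_mul_left (enorm_tsum_le_tsum_enorm) _).trans ?_
        rw [← ENNReal.tsum_mul_right]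
        refine ENNReal.tsum_le_tsum fun η => ?_
        rw [enorm_mul]
        calc ‖a η‖ₑ * ‖b (ξ - η)‖ₑ * ew s ξ ≤ ‖a η‖ₑ * ‖b (ξ - η)‖ₑ * (ew s η * ew s (ξ - η)) :=
              mul_le_mul_right (ew_sub_le hs ξ η) _
          _ = _ := by ring
    _ = ∑' η, ∑' ξ, (‖a η‖ₑ * ew s η) * (‖b (ξ - η)‖ₑ * ew s (ξ - η)) := ENNReal.tsum_comm
    _ = ∑' η, (‖a η‖ₑ * ew s η) * ∑' ξ, (‖b ξ‖ₑ * ew s ξ) := by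
        refine tsum_congr fun η => ?_
        rw [ENNReal.tsum_mul_left]
        congr 1
        exact (Equiv.subRight η).tsum_eq (fun ξ => ‖b ξ‖ₑ * ew s ξ)
    _ = _ := ENNReal.tsum_mul_right

lemma N_mult {s s' C : ℝ} (μ : (Fin m → ℤ) → ℂ) (a : (Fin m → ℤ) → ℂ)
    (h : ∀ ξ, ‖μ ξ‖ * Real.exp (s * wt ξ) ≤ C * Real.exp (s' * wt ξ)) (hC : 0 ≤ C) :
    N s (fun ξ => μ ξ * a ξ) ≤ ENNReal.ofReal C * N s' a := by
  unfold N
  rw [← ENNReal.tsum_mul_left]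
  refine ENNReal.tsum_le_tsum fun ξ => ?_
  rw [enorm_mul]
  have : ‖μ ξ‖ₑ * ew s ξ ≤ ENNReal.ofReal C * ew s' ξ := by
    unfold ew
    rw [← ofReal_norm, ← ENNReal.ofReal_mul (norm_nonneg _), ← ENNReal.ofReal_mul hC]
    exact ENNReal.ofReal_le_ofReal (h ξ)
  calc ‖μ ξ‖ₑ * ‖a ξ‖ₑ * ew s ξ = (‖μ ξ‖ₑ * ew s ξ) * ‖a ξ‖ₑ := by ring
    _ ≤ (ENNReal.ofReal C * ew s' ξ) * ‖a ξ‖ₑ := mul_le_mul_left this _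
    _ = _ := by ring

lemma N_mono {s s' : ℝ} (h : s ≤ s') (a : (Fin m → ℤ) → ℂ) : N s a ≤ N s' a := by
  unfold N ew
  gcongr
  exact wt_nonneg _

lemma N_add_le (s : ℝ) (a b : (Fin m → ℤ) → ℂ) : N s (a + b) ≤ N s a + N s b := by
  unfold N
  rw [← ENNReal.tsum_add]
  refine ENNReal.tsum_le_tsum fun ξ => ?_
  rw [← add_mul]
  exact mul_le_mul_left (enorm_add_le _ _) _

lemma N_zero (s : ℝ) : N s (0 : (Fin m → ℤ) → ℂ) = 0 := by simp [N]

lemma N_sum_le {ι : Type*} (s : ℝ) (I : Finset ι) (f : ι → (Fin m → ℤ) → ℂ) :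
    N s (∑ i ∈ I, f i) ≤ ∑ i ∈ I, N s (f i) := by
  classical
  induction I using Finset.induction_on with
  | empty => simp [N_zero]
  | insert i I hi ih =>
    rw [Finset.sum_insert hi, Finset.sum_insert hi]
    exact (N_add_le _ _ _).trans (add_le_add le_rfl ih)

lemma N_smul (s : ℝ) (c : ℂ) (a : (Fin m → ℤ) → ℂ) : N s (c • a) = ‖c‖ₑ * N s a := by
  unfold N
  rw [← ENNReal.tsum_mul_left]
  refine tsum_congr fun ξ => ?_
  simp [enorm_mul, mul_assoc]

/-- Fourier multiplier of `∂_j` -/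
noncomputable def dx (j : Fin m) (a : (Fin m → ℤ) → ℂ) : (Fin m → ℤ) → ℂ :=
  fun ξ => (2 * Real.pi * Complex.I * (ξ j : ℂ)) * a ξ

/-- symbol of `1 - Δ` -/
noncomputable def lam (ξ : Fin m → ℤ) : ℝ := 1 + 4 * Real.pi ^ 2 * ∑ j, (ξ j : ℝ) ^ 2

lemma one_le_lam (ξ : Fin m → ℤ) : 1 ≤ lam ξ := by
  unfold lam
  have : 0 ≤ ∑ j, (ξ j : ℝ) ^ 2 := Finset.sum_nonneg fun _ _ => sq_nonneg _
  have : 0 ≤ 4 * Real.pi ^ 2 * ∑ j, (ξ j : ℝ) ^ 2 := by positivity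
  linarith

/-- Fourier multiplier of `(1-Δ)⁻¹` -/
noncomputable def linv (a : (Fin m → ℤ) → ℂ) : (Fin m → ℤ) → ℂ :=
  fun ξ => ((lam ξ)⁻¹ : ℂ) * a ξ

lemma N_linv_le (s : ℝ) (a : (Fin m → ℤ) → ℂ) : N s (linv a) ≤ N s a := by
  have := N_mult (s := s) (s' := s) (C := 1) (fun ξ => ((lam ξ)⁻¹ : ℂ)) a (fun ξ => by
    refine mul_le_mul_of_nonneg_right ?_ (Real.exp_pos _).le
    rw [norm_inv, Complex.norm_real, Real.norm_of_nonneg (zero_le_one.trans (one_le_lam ξ))]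
    exact inv_le_one_of_one_le₀ (one_le_lam ξ)) zero_le_one
  rw [ENNReal.ofReal_one, one_mul] at this
  exact this

lemma N_dx_le {s δ : ℝ} (hδ : 0 < δ) (j : Fin m) (a : (Fin m → ℤ) → ℂ) :
    N s (dx j a) ≤ ENNReal.ofReal (2 * Real.pi / δ) * N (s + δ) a := by
  refine N_mult _ a (fun ξ => ?_) (by positivity)
  have h1 : ‖(2 * Real.pi * Complex.I * (ξ j : ℂ))‖ ≤ 2 * Real.pi * wt ξ := by
    simp only [norm_mul, Complex.norm_I, mul_one, Complex.norm_real, Complex.norm_ofNat,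
      Real.norm_of_nonneg Real.pi_pos.le, Complex.norm_intCast]
    exact mul_le_mul_of_nonneg_left (abs_le_wt ξ j) (by positivity)
  have h2 : wt ξ ≤ Real.exp (δ * wt ξ) / δ := by
    rw [le_div_iff₀ hδ]
    have := Real.add_one_le_exp (δ * wt ξ)
    linarith
  have h3 : Real.exp ((s + δ) * wt ξ) = Real.exp (s * wt ξ) * Real.exp (δ * wt ξ) := by
    rw [← Real.exp_add]; ring_nf
  rw [h3]
  calc _ ≤ 2 * Real.pi * (Real.exp (δ * wt ξ) / δ) * Real.exp (s * wt ξ) := by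
        refine mul_le_mul_of_nonneg_right (h1.trans ?_) (Real.exp_pos _).le
        exact mul_le_mul_of_nonneg_left h2 (by positivity)
    _ = _ := by ring

/-- existence of sequences defined by full-history recursion -/
lemma exists_rec {S : Type*} (u0 : S) (G : ℕ → (ℕ → S) → S)
    (hG : ∀ k (f g : ℕ → S), (∀ i ≤ k, f i = g i) → G k f = G k g) :
    ∃ u : ℕ → S, u 0 = u0 ∧ ∀ k, u (k + 1) = G k u := by
  let H : ℕ → ℕ → S := fun n => Nat.rec (fun _ => u0)
    (fun k h => Function.update h (k + 1) (G k h)) n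
  have hH : ∀ k, H (k + 1) = Function.update (H k) (k + 1) (G k (H k)) := fun k => rfl
  have hst : ∀ d k, H (k + d) k = H k k := by
    intro d
    induction d with
    | zero => intro k; rfl
    | succ d ih =>
      intro k
      rw [← add_assoc, hH, Function.update_of_ne (by omega), ih]
  refine ⟨fun k => H k k, rfl, fun k => ?_⟩
  change H (k + 1) (k + 1) = _
  rw [hH, Function.update_self]
  refine hG _ _ _ fun i hi => ?_
  obtain ⟨d, rfl⟩ := Nat.exists_eq_add_of_le hi
  exact hst d i

/-- The recursion for the Taylor coefficients in time (`none` : density, `some j` : velocity). -/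
noncomputable def recG (k : ℕ) (u : ℕ → Option (Fin m) → (Fin m → ℤ) → ℂ) :
    Option (Fin m) → (Fin m → ℤ) → ℂ
  | none => (-(1 / ((k : ℂ) + 1))) • ∑ i, dx i (∑ p ∈ antidiagonal k,
      conv (u p.1 none) (u p.2 (some i)))
  | some j => (-(1 / ((k : ℂ) + 1))) • ((∑ i, ∑ p ∈ antidiagonal k,
      conv (u p.1 (some i)) (dx i (u p.2 (some j)))) + dx j (linv (u k none)))

lemma recG_congr (k : ℕ) (f g : ℕ → Option (Fin m) → (Fin m → ℤ) → ℂ)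
    (h : ∀ i ≤ k, f i = g i) : recG k f = recG k g := by
  funext c
  have h1 : ∀ p ∈ antidiagonal k, f p.1 = g p.1 ∧ f p.2 = g p.2 := by
    intro p hp
    rw [HasAntidiagonal.mem_antidiagonal] at hp
    exact ⟨h _ (by omega), h _ (by omega)⟩
  cases c with
  | none =>
    simp only [recG]
    congr 1
    refine Finset.sum_congr rfl fun i _ => ?_
    congr 1
    refine Finset.sum_congr rfl fun p hp => ?_
    rw [(h1 p hp).1, (h1 p hp).2]
  | some j =>
    simp only [recG]
    rw [h k le_rfl]
    congr 2
    refine Finset.sum_congr rfl fun i _ => ?_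
    refine Finset.sum_congr rfl fun p hp => ?_
    rw [(h1 p hp).1, (h1 p hp).2]

lemma catalan_le_succ (k : ℕ) : catalan k ≤ catalan (k + 1) := by
  rw [catalan_succ']
  have hmem : ((0, k) : ℕ × ℕ) ∈ antidiagonal k := by simp
  have := Finset.single_le_sum (f := fun p : ℕ × ℕ => catalan p.1 * catalan p.2)
    (fun _ _ => Nat.zero_le _) hmem
  simpa using this

lemma catalan_le_four_pow (k : ℕ) : catalan k ≤ 4 ^ k := by
  refine le_trans ?_ (Nat.centralBinom_le_four_pow k)
  rw [← succ_mul_catalan_eq_centralBinom]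
  exact Nat.le_mul_of_pos_left _ (Nat.succ_pos k)

lemma ratio_pow_le (k : ℕ) : (((k : ℝ) + 2) / (k + 1)) ^ k ≤ Real.exp 1 := by
  have h : ((k : ℝ) + 2) / (k + 1) = 1 / (k + 1) + 1 := by field_simp; ring
  rw [h]
  calc (1 / ((k : ℝ) + 1) + 1) ^ k ≤ (Real.exp (1 / ((k : ℝ) + 1))) ^ k :=
        pow_le_pow_left₀ (by positivity) (Real.add_one_le_exp _) _
    _ = Real.exp (k * (1 / ((k : ℝ) + 1))) := by rw [← Real.exp_nat_mul]
    _ ≤ Real.exp 1 := by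
        refine Real.exp_le_exp.2 ?_
        rw [mul_one_div, div_le_one (by positivity)]
        linarith

theorem N_bound {s₀ M : ℝ} (hM : 1 ≤ M)
    (u : ℕ → Option (Fin m) → (Fin m → ℤ) → ℂ)
    (h0 : ∀ c, N s₀ (u 0 c) ≤ ENNReal.ofReal M)
    (hrec : ∀ k, u (k + 1) = recG k u) :
    ∀ k c δ, 0 < δ → δ ≤ s₀ → N (s₀ - δ) (u k c) ≤
      ENNReal.ofReal (M * catalan k *
        ((4 * Real.pi * Real.exp 1 * (m + 1) * M) / δ) ^ k) := by
  set K : ℝ := 4 * Real.pi * Real.exp 1 * (m + 1) * M with hK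
  have hK0 : 0 < K := by positivity
  have hM0 : 0 < M := by linarith
  intro k
  induction k using Nat.strong_induction_on with
  | _ k IH =>
  rcases k with _ | k
  · intro c δ hδ hδs
    refine (N_mono (by linarith) _).trans ((h0 c).trans ?_)
    simp
  intro c δ hδ hδs
  -- auxiliary radii
  set δ1 : ℝ := δ / (k + 2) with hδ1
  have hδpos : 0 < δ1 := by positivity
  set δ' : ℝ := δ * ((k + 1) / (k + 2)) with hδ'
  have hδ'p : 0 < δ' := by positivity
  have hsum : δ' + δ1 = δ := by rw [hδ', hδ1]; field_simp; ring
  have hδ's : δ' ≤ s₀ := by linarith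
  have hs1 : s₀ - δ + δ1 = s₀ - δ' := by linarith
  have hs0 : 0 ≤ s₀ - δ' := by linarith
  have hs00 : 0 ≤ s₀ - δ := by linarith
  set B : ℕ → ℝ := fun i => M * catalan i * (K / δ') ^ i with hB
  have hB0 : ∀ i, 0 ≤ B i := fun i => by positivity
  have hIH : ∀ i ≤ k, ∀ c, N (s₀ - δ') (u i c) ≤ ENNReal.ofReal (B i) :=
    fun i hi c => IH i (by omega) c δ' hδ'p hδ's
  set Q : ℝ := M ^ 2 * catalan (k + 1) * (K / δ') ^ k with hQ
  have hQ0 : 0 ≤ Q := by positivity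
  have hQs : ∑ p ∈ antidiagonal k, B p.1 * B p.2 = Q := by
    rw [hQ, catalan_succ']
    push_cast
    rw [Finset.mul_sum, Finset.sum_mul]
    refine Finset.sum_congr rfl fun p hp => ?_
    rw [HasAntidiagonal.mem_antidiagonal] at hp
    rw [← hp, pow_add]
    simp only [hB]
    ring
  have hBQ : B k ≤ Q := by
    simp only [hB, hQ]
    refine mul_le_mul_of_nonneg_right ?_ (by positivity)
    have h1 : (catalan k : ℝ) ≤ catalan (k + 1) := by exact_mod_cast catalan_le_succ k
    have h2 : M ≤ M ^ 2 := by nlinarith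
    exact mul_le_mul h2 h1 (by positivity) (by positivity)
  have hprod : ∀ c c' : ℕ → Option (Fin m), ∑ p ∈ antidiagonal k,
      N (s₀ - δ') (u p.1 (c p.1)) * N (s₀ - δ') (u p.2 (c' p.2)) ≤ ENNReal.ofReal Q := by
    intro c c'
    rw [← hQs, ENNReal.ofReal_sum_of_nonneg (fun p _ => mul_nonneg (hB0 _) (hB0 _))]
    refine Finset.sum_le_sum fun p hp => ?_
    rw [HasAntidiagonal.mem_antidiagonal] at hp
    rw [ENNReal.ofReal_mul (hB0 _)]
    exact mul_le_mul' (hIH _ (by omega) _) (hIH _ (by omega) _)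
  set Lc : ℝ≥0∞ := ENNReal.ofReal (2 * Real.pi / δ1) with hLc
  have hdx : ∀ j a, N (s₀ - δ) (dx j a) ≤ Lc * N (s₀ - δ') (a : (Fin m → ℤ) → ℂ) := by
    intro j a
    have := N_dx_le (s := s₀ - δ) hδpos j a
    rwa [hs1] at this
  -- main bound on the bracket
  have hnorm : ‖(-(1 / ((k : ℂ) + 1)))‖ₑ = ENNReal.ofReal (1 / (k + 1)) := by
    rw [← ofReal_norm, norm_neg, norm_div, norm_one]
    congr 2
    have : ((k : ℂ) + 1) = ((k + 1 : ℕ) : ℂ) := by push_cast; rfl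
    rw [this, Complex.norm_natCast]; push_cast; rfl
  have hmain : N (s₀ - δ) (recG k u c) ≤
      ENNReal.ofReal (1 / (k + 1)) * (((m : ℝ≥0∞) + 1) * (Lc * ENNReal.ofReal Q)) := by
    cases c with
    | none =>
      simp only [recG]
      rw [N_smul, hnorm]
      refine mul_le_mul_right ?_ _
      refine (N_sum_le _ _ _).trans ?_
      calc _ ≤ ∑ i : Fin m, Lc * ENNReal.ofReal Q := by
            refine Finset.sum_le_sum fun i _ => ?_
            refine (hdx i _).trans (mul_le_mul_right ?_ _)
            refine (N_sum_le _ _ _).trans ?_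
            refine le_trans ?_ (hprod (fun _ => none) (fun _ => some i))
            exact Finset.sum_le_sum fun p _ => N_conv_le hs0 _ _
        _ = (m : ℝ≥0∞) * (Lc * ENNReal.ofReal Q) := by simp
        _ ≤ _ := by gcongr; exact le_self_add
    | some j =>
      simp only [recG]
      rw [N_smul, hnorm]
      refine mul_le_mul_right ?_ _
      refine (N_add_le _ _ _).trans ?_
      rw [add_mul, one_mul]
      refine add_le_add ?_ ?_
      · refine (N_sum_le _ _ _).trans ?_
        calc _ ≤ ∑ i : Fin m, Lc * ENNReal.ofReal Q := by
              refine Finset.sum_le_sum fun i _ => ?_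
              refine (N_sum_le _ _ _).trans ?_
              refine le_trans ?_ (mul_le_mul_right (hprod (fun _ => some i) (fun _ => some j)) _)
              rw [Finset.mul_sum]
              refine Finset.sum_le_sum fun p _ => ?_
              refine (N_conv_le hs00 _ _).trans ?_
              calc _ ≤ N (s₀ - δ') (u p.1 (some i)) * (Lc * N (s₀ - δ') (u p.2 (some j))) :=
                    mul_le_mul' (N_mono (by linarith) _) (hdx _ _)
                _ = _ := by ring
          _ = (m : ℝ≥0∞) * (Lc * ENNReal.ofReal Q) := by simp
      · refine (hdx j _).trans (mul_le_mul_right ?_ _)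
        refine (N_linv_le _ _).trans ((hIH k le_rfl none).trans ?_)
        exact ENNReal.ofReal_le_ofReal hBQ
  rw [hrec]
  refine hmain.trans ?_
  have hm1 : ((m : ℝ≥0∞) + 1) = ENNReal.ofReal ((m : ℝ) + 1) := by
    rw [ENNReal.ofReal_add (by positivity) zero_le_one]; simp
  rw [hm1, hLc, ← ENNReal.ofReal_mul (by positivity), ← ENNReal.ofReal_mul (by positivity),
    ← ENNReal.ofReal_mul (by positivity)]
  refine ENNReal.ofReal_le_ofReal ?_
  have e1 : (K / δ') ^ k = (K / δ) ^ k * (((k : ℝ) + 2) / (k + 1)) ^ k := by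
    rw [← mul_pow]
    congr 1
    rw [hδ']
    field_simp
  have e2 : (K / δ') ^ k ≤ (K / δ) ^ k * Real.exp 1 := by
    rw [e1]
    exact mul_le_mul_of_nonneg_left (ratio_pow_le k) (by positivity)
  have e3 : ((k : ℝ) + 2) / (k + 1) ≤ 2 := by
    rw [div_le_iff₀ (by positivity)]; linarith [(Nat.cast_nonneg k : (0:ℝ) ≤ k)]
  calc 1 / ((k : ℝ) + 1) * (((m : ℝ) + 1) * (2 * Real.pi / δ1 * Q))
      = (((k : ℝ) + 2) / (k + 1)) * (((m : ℝ) + 1) * (2 * Real.pi / δ) *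
          (M ^ 2 * catalan (k + 1))) * (K / δ') ^ k := by
        rw [hδ1, hQ]; field_simp
    _ ≤ 2 * (((m : ℝ) + 1) * (2 * Real.pi / δ) *
          (M ^ 2 * catalan (k + 1))) * ((K / δ) ^ k * Real.exp 1) := by
        gcongr
    _ = M * catalan (k + 1) * (K / δ) ^ (k + 1) := by
        rw [pow_succ (K / δ) k]
        generalize (K / δ) ^ k = X
        rw [hK]
        field_simp
        ring

end MEP

namespace MEP
open scoped ENNReal BigOperators NNReal
open Finset

/-! ## Part B : conjugation symmetry -/

section sym
variable {m : ℕ}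

/-- coefficients of a real-valued function -/
def Sym (a : (Fin m → ℤ) → ℂ) : Prop := ∀ ξ, a (-ξ) = (starRingEnd ℂ) (a ξ)

lemma Sym.conv {a b : (Fin m → ℤ) → ℂ} (ha : Sym a) (hb : Sym b) : Sym (conv a b) := by
  intro ξ
  unfold MEP.conv
  rw [← (Equiv.neg (Fin m → ℤ)).tsum_eq, Complex.conj_tsum]
  refine tsum_congr fun η => ?_
  have : -ξ - (Equiv.neg (Fin m → ℤ)) η = -(ξ - η) := by simp; abel
  rw [this, hb, Equiv.neg_apply, ha, map_mul]

lemma Sym.dx {a : (Fin m → ℤ) → ℂ} (ha : Sym a) (j : Fin m) : Sym (dx j a) := by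
  intro ξ
  simp only [MEP.dx, ha ξ, map_mul, Complex.conj_I, Complex.conj_ofReal, map_ofNat, map_intCast,
    Pi.neg_apply, Int.cast_neg]
  ring

lemma lam_neg (ξ : Fin m → ℤ) : lam (-ξ) = lam ξ := by simp [lam]

lemma Sym.linv {a : (Fin m → ℤ) → ℂ} (ha : Sym a) : Sym (linv a) := by
  intro ξ
  simp only [MEP.linv, ha ξ, map_mul, lam_neg, map_inv₀, Complex.conj_ofReal]

lemma Sym.add {a b : (Fin m → ℤ) → ℂ} (ha : Sym a) (hb : Sym b) : Sym (a + b) := by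
  intro ξ; simp [ha ξ, hb ξ]

lemma Sym.sum {ι : Type*} (I : Finset ι) {f : ι → (Fin m → ℤ) → ℂ} (h : ∀ i ∈ I, Sym (f i)) :
    Sym (∑ i ∈ I, f i) := by
  intro ξ
  simp only [Finset.sum_apply, map_sum]
  exact Finset.sum_congr rfl fun i hi => h i hi ξ

lemma Sym.smul {a : (Fin m → ℤ) → ℂ} (ha : Sym a) (k : ℕ) :
    Sym ((-(1 / ((k : ℂ) + 1))) • a) := by
  intro ξ; simp [ha ξ]

lemma recG_sym (k : ℕ) (u : ℕ → Option (Fin m) → (Fin m → ℤ) → ℂ)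
    (h : ∀ i ≤ k, ∀ c, Sym (u i c)) (c : Option (Fin m)) : Sym (recG k u c) := by
  have h1 : ∀ p ∈ antidiagonal k, (∀ c, Sym (u p.1 c)) ∧ (∀ c, Sym (u p.2 c)) := by
    intro p hp
    rw [HasAntidiagonal.mem_antidiagonal] at hp
    exact ⟨h _ (by omega), h _ (by omega)⟩
  cases c with
  | none =>
    simp only [recG]
    exact (Sym.sum _ fun i _ => (Sym.sum _ fun p hp =>
      ((h1 p hp).1 _).conv ((h1 p hp).2 _)).dx i).smul k
  | some j =>
    simp only [recG]
    exact ((Sym.sum _ fun i _ => Sym.sum _ fun p hp =>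
      ((h1 p hp).1 _).conv (((h1 p hp).2 _).dx i)).add ((h k le_rfl none).linv.dx j)).smul k

end sym

/-! ## Part C : a criterion for analyticity of a series of analytic functions -/

section series

lemma hasFPowerSeriesOnBall_tsum {ι E F : Type*} [NormedAddCommGroup E] [NormedSpace ℝ E]
    [NormedAddCommGroup F] [NormedSpace ℝ F] [CompleteSpace F]
    (f : ι → E → F) (p : ι → FormalMultilinearSeries ℝ E F) (x : E) (r : ℝ≥0) (hr : 0 < r)
    (hs : Summable fun z : ι × ℕ => ‖p z.1 z.2‖ * (r : ℝ) ^ z.2)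
    (hf : ∀ i y, ‖y‖ < r → HasSum (fun n => p i n (fun _ => y)) (f i (x + y))) :
    HasFPowerSeriesOnBall (fun z => ∑' i, f i z) (fun n => ∑' i, p i n) x r := by
  have hs' : Summable fun z : ℕ × ι => ‖p z.2 z.1‖ * (r : ℝ) ^ z.1 :=
    (Equiv.prodComm ℕ ι).summable_iff.2 hs
  have hr' : (0 : ℝ) < r := hr
  have hsn : ∀ n, Summable fun i => ‖p i n‖ := by
    intro n
    have := hs'.prod_factor n
    exact (summable_mul_right_iff (pow_pos hr' n).ne').1 this
  have hsn' : ∀ n, Summable fun i => p i n := fun n => (hsn n).of_norm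
  refine ⟨?_, by exact_mod_cast hr, ?_⟩
  · refine FormalMultilinearSeries.le_radius_of_summable_norm _ ?_
    refine Summable.of_nonneg_of_le (fun n => by positivity) (fun n => ?_) hs'.prod
    have h0 : (∑' c : ι, ‖p c n‖ * (r : ℝ) ^ n) = (∑' c : ι, ‖p c n‖) * (r : ℝ) ^ n :=
      tsum_mul_right
    refine le_trans ?_ h0.ge
    exact mul_le_mul_of_nonneg_right (norm_tsum_le_tsum_norm (hsn n)) (by positivity)
  · intro y hy
    have hy' : ‖y‖ < r := by simpa [← NNReal.coe_lt_coe] using hy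
    have hsy : Summable fun z : ι × ℕ => p z.1 z.2 (fun _ => y) := by
      refine Summable.of_norm_bounded hs fun z => ?_
      refine ((p z.1 z.2).le_opNorm _).trans ?_
      refine mul_le_mul_of_nonneg_left ?_ (norm_nonneg _)
      simp only [Finset.prod_const, Finset.card_univ, Fintype.card_fin]
      exact pow_le_pow_left₀ (norm_nonneg _) hy'.le _
    have h1 := hsy.hasSum.prod_fiberwise (fun i => hf i y hy')
    have h2 : HasSum (fun z : ℕ × ι => p z.2 z.1 (fun _ => y))
        (∑' z : ι × ℕ, p z.1 z.2 (fun _ => y)) :=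
      (Equiv.prodComm ℕ ι).hasSum_iff.2 hsy.hasSum
    have h3 := h2.prod_fiberwise (fun n =>
      ContinuousMultilinearMap.hasSum_eval (hsn' n).hasSum (fun _ => y))
    rw [← h1.tsum_eq] at h3
    exact h3

end series

end MEP

namespace MEP
open scoped ENNReal BigOperators NNReal
open Finset

/-! ## Part D : evaluation of space-time coefficient arrays -/

section eval
variable {m : ℕ}

/-- the linear functional `x ↦ ξ · x` -/
noncomputable def lin (ξ : Fin m → ℤ) : EuclideanSpace ℝ (Fin m) →L[ℝ] ℝ :=
  ∑ j, (ξ j : ℝ) • (EuclideanSpace.proj j : EuclideanSpace ℝ (Fin m) →L[ℝ] ℝ)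

lemma lin_apply (ξ : Fin m → ℤ) (x : EuclideanSpace ℝ (Fin m)) :
    lin ξ x = ∑ j, (ξ j : ℝ) * x j := by
  simp [lin]

lemma norm_lin_le (ξ : Fin m → ℤ) : ‖lin ξ‖ ≤ wt ξ := by
  refine ContinuousLinearMap.opNorm_le_bound _ (wt_nonneg ξ) fun x => ?_
  rw [lin_apply, wt, Finset.sum_mul]
  refine (norm_sum_le _ _).trans (Finset.sum_le_sum fun j _ => ?_)
  rw [norm_mul, Real.norm_eq_abs]
  exact mul_le_mul_of_nonneg_left (PiLp.norm_apply_le x j) (abs_nonneg _)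

lemma lin_single (ξ : Fin m → ℤ) (j : Fin m) :
    lin ξ (EuclideanSpace.single j 1) = ξ j := by
  simp [lin_apply]

/-- the character `x ↦ exp (2π i ξ · x)` -/
noncomputable def ex (ξ : Fin m → ℤ) (x : EuclideanSpace ℝ (Fin m)) : ℂ :=
  Complex.exp (2 * Real.pi * Complex.I * (lin ξ x : ℝ))

lemma norm_ex (ξ : Fin m → ℤ) (x : EuclideanSpace ℝ (Fin m)) : ‖ex ξ x‖ = 1 := by
  unfold ex
  have : (2 * Real.pi * Complex.I * (lin ξ x : ℝ) : ℂ) =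
      ((2 * Real.pi * lin ξ x : ℝ) : ℂ) * Complex.I := by push_cast; ring
  rw [this, Complex.norm_exp_ofReal_mul_I]

lemma lin_add_left (ξ η : Fin m → ℤ) (x : EuclideanSpace ℝ (Fin m)) :
    lin (ξ + η) x = lin ξ x + lin η x := by
  simp [lin_apply, add_mul, Finset.sum_add_distrib]

lemma ex_add_left (ξ η : Fin m → ℤ) (x : EuclideanSpace ℝ (Fin m)) :
    ex (ξ + η) x = ex ξ x * ex η x := by
  unfold ex
  rw [← Complex.exp_add, lin_add_left]
  push_cast
  ring_nf

lemma ex_add_right (ξ : Fin m → ℤ) (x y : EuclideanSpace ℝ (Fin m)) :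
    ex ξ (x + y) = ex ξ x * ex ξ y := by
  unfold ex
  rw [← Complex.exp_add, map_add]
  push_cast
  ring_nf

lemma ex_neg (ξ : Fin m → ℤ) (x : EuclideanSpace ℝ (Fin m)) :
    ex (-ξ) x = (starRingEnd ℂ) (ex ξ x) := by
  unfold ex
  rw [← Complex.exp_conj]
  have : lin (-ξ) x = - lin ξ x := by simp [lin_apply]
  rw [this]
  simp [Complex.conj_ofNat]

lemma ex_int (ξ : Fin m → ℤ) (z : Fin m → ℤ) :
    ex ξ ((WithLp.equiv 2 (Fin m → ℝ)).symm fun i => (z i : ℝ)) = 1 := by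
  unfold ex
  rw [Complex.exp_eq_one_iff]
  refine ⟨∑ j, ξ j * z j, ?_⟩
  rw [lin_apply]
  simp
  ring

/-- the time-space norm of an array -/
noncomputable def NN (r s : ℝ) (A : ℕ → (Fin m → ℤ) → ℂ) : ℝ≥0∞ :=
  ∑' k, ENNReal.ofReal (r ^ k) * N s (A k)

/-- the function with coefficient array `A` -/
noncomputable def F (A : ℕ → (Fin m → ℤ) → ℂ) (p : ℝ × EuclideanSpace ℝ (Fin m)) : ℂ :=
  ∑' q : ℕ × (Fin m → ℤ), A q.1 q.2 * (p.1 : ℂ) ^ q.1 * ex q.2 p.2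

lemma summable_of_NN {r s : ℝ} (hr : 0 ≤ r) {A : ℕ → (Fin m → ℤ) → ℂ} (h : NN r s A ≠ ∞) :
    Summable fun q : ℕ × (Fin m → ℤ) => ‖A q.1 q.2‖ * r ^ q.1 * Real.exp (s * wt q.2) := by
  have h1 : (∑' q : ℕ × (Fin m → ℤ),
      ENNReal.ofReal (‖A q.1 q.2‖ * r ^ q.1 * Real.exp (s * wt q.2))) ≠ ∞ := by
    rw [ENNReal.tsum_prod']
    convert h using 1
    unfold NN
    refine tsum_congr fun k => ?_
    unfold N ew
    rw [← ENNReal.tsum_mul_left]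
    refine tsum_congr fun ξ => ?_
    rw [ENNReal.ofReal_mul (by positivity), ENNReal.ofReal_mul (by positivity), ofReal_norm]
    ring
  exact (ENNReal.summable_toReal h1).congr fun q => ENNReal.toReal_ofReal (by positivity)

lemma summable_F_norm {r s : ℝ} (hr : 0 ≤ r) (hs : 0 ≤ s) {A : ℕ → (Fin m → ℤ) → ℂ}
    (h : NN r s A ≠ ∞) {p : ℝ × EuclideanSpace ℝ (Fin m)} (hp : |p.1| ≤ r) :
    Summable fun q : ℕ × (Fin m → ℤ) => ‖A q.1 q.2 * (p.1 : ℂ) ^ q.1 * ex q.2 p.2‖ := by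
  refine Summable.of_nonneg_of_le (fun _ => norm_nonneg _) (fun q => ?_) (summable_of_NN hr h)
  rw [norm_mul, norm_mul, norm_ex, norm_pow, Complex.norm_real, Real.norm_eq_abs, mul_one]
  have h1 : |p.1| ^ q.1 ≤ r ^ q.1 := pow_le_pow_left₀ (abs_nonneg _) hp _
  have h2 : 1 ≤ Real.exp (s * wt q.2) := Real.one_le_exp (mul_nonneg hs (wt_nonneg _))
  calc ‖A q.1 q.2‖ * |p.1| ^ q.1 ≤ ‖A q.1 q.2‖ * r ^ q.1 :=
        mul_le_mul_of_nonneg_left h1 (norm_nonneg _)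
    _ ≤ _ := le_mul_of_one_le_right (by positivity) h2

/-! ### periodicity and reality -/

lemma F_periodic (A : ℕ → (Fin m → ℤ) → ℂ) (t : ℝ) (x : EuclideanSpace ℝ (Fin m))
    (z : Fin m → ℤ) :
    F A (t, x + (WithLp.equiv 2 (Fin m → ℝ)).symm fun i => (z i : ℝ)) = F A (t, x) := by
  unfold F
  refine tsum_congr fun q => ?_
  simp only [ex_add_right, ex_int, mul_one]

lemma F_real {A : ℕ → (Fin m → ℤ) → ℂ} (hA : ∀ k, Sym (A k))
    (p : ℝ × EuclideanSpace ℝ (Fin m)) : ((F A p).re : ℂ) = F A p := by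
  rw [← Complex.conj_eq_iff_re]
  unfold F
  rw [Complex.conj_tsum, ← ((Equiv.refl ℕ).prodCongr (Equiv.neg (Fin m → ℤ))).tsum_eq]
  refine tsum_congr fun q => ?_
  simp [hA q.1 q.2, ex_neg]

/-! ### linearity -/

lemma F_add {r s : ℝ} (hr : 0 ≤ r) (hs : 0 ≤ s) {A B : ℕ → (Fin m → ℤ) → ℂ}
    (hA : NN r s A ≠ ∞) (hB : NN r s B ≠ ∞)
    {p : ℝ × EuclideanSpace ℝ (Fin m)} (hp : |p.1| ≤ r) : F (A + B) p = F A p + F B p := by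
  unfold F
  rw [← (summable_F_norm hr hs hA hp).of_norm.tsum_add (summable_F_norm hr hs hB hp).of_norm]
  refine tsum_congr fun q => ?_
  simp only [Pi.add_apply]
  ring

lemma F_zero (p : ℝ × EuclideanSpace ℝ (Fin m)) : F (0 : ℕ → (Fin m → ℤ) → ℂ) p = 0 := by
  simp [F]

lemma NN_zero (r s : ℝ) : NN r s (0 : ℕ → (Fin m → ℤ) → ℂ) = 0 := by simp [NN, N_zero]

lemma NN_add_le (r s : ℝ) (A B : ℕ → (Fin m → ℤ) → ℂ) :
    NN r s (A + B) ≤ NN r s A + NN r s B := by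
  unfold NN
  rw [← ENNReal.tsum_add]
  refine ENNReal.tsum_le_tsum fun k => ?_
  rw [← mul_add]
  exact mul_le_mul_right (N_add_le _ _ _) _

lemma NN_add {r s : ℝ} {A B : ℕ → (Fin m → ℤ) → ℂ} (hA : NN r s A ≠ ∞) (hB : NN r s B ≠ ∞) :
    NN r s (A + B) ≠ ∞ :=
  ne_top_of_le_ne_top (ENNReal.add_ne_top.2 ⟨hA, hB⟩) (NN_add_le r s A B)

lemma NN_sum {ι : Type*} (I : Finset ι) {r s : ℝ} {f : ι → ℕ → (Fin m → ℤ) → ℂ}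
    (h : ∀ i, NN r s (f i) ≠ ∞) : NN r s (∑ i ∈ I, f i) ≠ ∞ := by
  classical
  induction I using Finset.induction_on with
  | empty => simp [NN_zero]
  | insert i I hi ih =>
    rw [Finset.sum_insert hi]
    exact NN_add (h i) ih

lemma F_sum {ι : Type*} (I : Finset ι) {r s : ℝ} (hr : 0 ≤ r) (hs : 0 ≤ s)
    {f : ι → ℕ → (Fin m → ℤ) → ℂ} (h : ∀ i, NN r s (f i) ≠ ∞)
    {p : ℝ × EuclideanSpace ℝ (Fin m)} (hp : |p.1| ≤ r) :
    F (∑ i ∈ I, f i) p = ∑ i ∈ I, F (f i) p := by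
  classical
  induction I using Finset.induction_on with
  | empty => simp [F_zero]
  | insert i I hi ih =>
    rw [Finset.sum_insert hi, Finset.sum_insert hi, F_add hr hs (h i) (NN_sum I h) hp, ih]

lemma NN_mono {r r' s s' : ℝ} (hr : 0 ≤ r) (h : r ≤ r') (h' : s ≤ s')
    (A : ℕ → (Fin m → ℤ) → ℂ) : NN r s A ≤ NN r' s' A := by
  unfold NN
  refine ENNReal.tsum_le_tsum fun k => ?_
  exact mul_le_mul' (ENNReal.ofReal_le_ofReal (pow_le_pow_left₀ hr h k)) (N_mono h' _)

/-! ### products -/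

/-- the array of a product -/
noncomputable def mulA (A B : ℕ → (Fin m → ℤ) → ℂ) : ℕ → (Fin m → ℤ) → ℂ :=
  fun k => ∑ p ∈ antidiagonal k, conv (A p.1) (B p.2)

lemma NN_mulA_le {r s : ℝ} (hr : 0 ≤ r) (hs : 0 ≤ s) (A B : ℕ → (Fin m → ℤ) → ℂ) :
    NN r s (mulA A B) ≤ NN r s A * NN r s B := by
  unfold NN mulA
  set f : ℕ → ℝ≥0∞ := fun k => ENNReal.ofReal (r ^ k) * N s (A k)
  set g : ℕ → ℝ≥0∞ := fun k => ENNReal.ofReal (r ^ k) * N s (B k)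
  calc _ ≤ ∑' k, ∑ p ∈ antidiagonal k, f p.1 * g p.2 := by
        refine ENNReal.tsum_le_tsum fun k => ?_
        refine (mul_le_mul_right (N_sum_le _ _ _) _).trans ?_
        rw [Finset.mul_sum]
        refine Finset.sum_le_sum fun p hp => ?_
        rw [HasAntidiagonal.mem_antidiagonal] at hp
        refine (mul_le_mul_right (N_conv_le hs _ _) _).trans ?_
        rw [← hp, pow_add, ENNReal.ofReal_mul (by positivity)]
        simp only [f, g]
        apply le_of_eq
        ring
    _ = ∑' z : ℕ × ℕ, f z.1 * g z.2 := by
        rw [← Finset.HasAntidiagonal.sigmaAntidiagonalEquivProd.tsum_eq, ENNReal.tsum_sigma']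
        refine tsum_congr fun k => ?_
        rw [tsum_fintype]
        exact (Finset.sum_coe_sort (antidiagonal k) (fun p : ℕ × ℕ => f p.1 * g p.2)).symm
    _ = (∑' k, f k) * ∑' k, g k := by
        rw [ENNReal.tsum_prod']
        simp_rw [ENNReal.tsum_mul_left, ENNReal.tsum_mul_right]

/-- evaluation of spatial coefficients -/
noncomputable def ev (a : (Fin m → ℤ) → ℂ) (x : EuclideanSpace ℝ (Fin m)) : ℂ :=
  ∑' ξ, a ξ * ex ξ x

lemma summable_of_N {s : ℝ} (hs : 0 ≤ s) {a : (Fin m → ℤ) → ℂ} (h : N s a ≠ ∞) :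
    Summable fun ξ => ‖a ξ‖ := by
  have h1 : (∑' ξ, ‖a ξ‖ₑ) ≠ ∞ := by
    refine ne_top_of_le_ne_top h (ENNReal.tsum_le_tsum fun ξ => ?_)
    refine le_mul_of_one_le_right' ?_
    unfold ew
    rw [ENNReal.one_le_ofReal]
    exact Real.one_le_exp (mul_nonneg hs (wt_nonneg _))
  exact (ENNReal.summable_toReal h1).congr fun ξ => toReal_enorm _

lemma summable_ev {a : (Fin m → ℤ) → ℂ} (h : Summable fun ξ => ‖a ξ‖)
    (x : EuclideanSpace ℝ (Fin m)) : Summable fun ξ => ‖a ξ * ex ξ x‖ := by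
  simpa [norm_mul, norm_ex] using h

lemma ev_conv {a b : (Fin m → ℤ) → ℂ} (ha : Summable fun ξ => ‖a ξ‖)
    (hb : Summable fun ξ => ‖b ξ‖) (x : EuclideanSpace ℝ (Fin m)) :
    ev (conv a b) x = ev a x * ev b x := by
  unfold ev conv
  rw [tsum_mul_tsum_of_summable_norm (summable_ev ha x) (summable_ev hb x)]
  let e : (Fin m → ℤ) × (Fin m → ℤ) ≃ (Fin m → ℤ) × (Fin m → ℤ) :=
    { toFun := fun z => (z.2, z.1 - z.2)
      invFun := fun z => (z.1 + z.2, z.1)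
      left_inv := fun z => by ext <;> simp
      right_inv := fun z => by ext <;> simp }
  have hs := summable_mul_of_summable_norm (summable_ev ha x) (summable_ev hb x)
  have hs2 := (e.summable_iff).2 hs
  simp only [Function.comp_def] at hs2
  rw [← e.tsum_eq, hs2.tsum_prod]
  refine tsum_congr fun ξ => ?_
  rw [← tsum_mul_right]
  refine tsum_congr fun η => ?_
  simp only [e, Equiv.coe_fn_mk]
  have : ex ξ x = ex η x * ex (ξ - η) x := by rw [← ex_add_left]; simp
  rw [this]
  ring

lemma ev_sum {ι : Type*} (I : Finset ι) {f : ι → (Fin m → ℤ) → ℂ}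
    (h : ∀ i ∈ I, Summable fun ξ => ‖f i ξ‖) (x : EuclideanSpace ℝ (Fin m)) :
    ev (∑ i ∈ I, f i) x = ∑ i ∈ I, ev (f i) x := by
  unfold ev
  rw [← Summable.tsum_finsetSum (fun i hi => (summable_ev (h i hi) x).of_norm)]
  refine tsum_congr fun ξ => ?_
  rw [Finset.sum_apply, Finset.sum_mul]

lemma F_eq_ev {r s : ℝ} (hr : 0 ≤ r) (hs : 0 ≤ s) {A : ℕ → (Fin m → ℤ) → ℂ}
    (h : NN r s A ≠ ∞) {p : ℝ × EuclideanSpace ℝ (Fin m)} (hp : |p.1| ≤ r) :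
    F A p = ∑' k, (p.1 : ℂ) ^ k * ev (A k) p.2 := by
  unfold F
  rw [(summable_F_norm hr hs h hp).of_norm.tsum_prod]
  refine tsum_congr fun k => ?_
  unfold ev
  rw [← tsum_mul_left]
  refine tsum_congr fun ξ => ?_
  simp only
  ring

lemma N_ne_top_of_NN {r s : ℝ} (hr : 0 < r) {A : ℕ → (Fin m → ℤ) → ℂ}
    (h : NN r s A ≠ ∞) (k : ℕ) : N s (A k) ≠ ∞ := by
  intro hk
  have h1 := ENNReal.ne_top_of_tsum_ne_top h k
  rw [hk, ENNReal.mul_top (by simpa using pow_pos hr k)] at h1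
  exact h1 rfl

lemma summable_ev_pow {r s : ℝ} (hr : 0 ≤ r) (hs : 0 ≤ s) {A : ℕ → (Fin m → ℤ) → ℂ}
    (h : NN r s A ≠ ∞) {p : ℝ × EuclideanSpace ℝ (Fin m)} (hp : |p.1| ≤ r) :
    Summable fun k => ‖(p.1 : ℂ) ^ k * ev (A k) p.2‖ := by
  have h0 := summable_F_norm hr hs h hp
  refine Summable.of_nonneg_of_le (fun _ => norm_nonneg _) (fun k => ?_) h0.prod
  unfold ev
  rw [← tsum_mul_left]
  have h1 := h0.prod_factor k
  have h2 : (∑' ξ, (p.1 : ℂ) ^ k * (A k ξ * ex ξ p.2)) = ∑' ξ, A k ξ * (p.1 : ℂ) ^ k * ex ξ p.2 :=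
    tsum_congr fun ξ => by ring
  rw [h2]
  exact norm_tsum_le_tsum_norm h1

lemma F_mul {r s : ℝ} (hr : 0 < r) (hs : 0 ≤ s) {A B : ℕ → (Fin m → ℤ) → ℂ}
    (hA : NN r s A ≠ ∞) (hB : NN r s B ≠ ∞)
    {p : ℝ × EuclideanSpace ℝ (Fin m)} (hp : |p.1| ≤ r) :
    F A p * F B p = F (mulA A B) p := by
  have hAB : NN r s (mulA A B) ≠ ∞ :=
    ne_top_of_le_ne_top (ENNReal.mul_ne_top hA hB) (NN_mulA_le hr.le hs A B)
  rw [F_eq_ev hr.le hs hA hp, F_eq_ev hr.le hs hB hp, F_eq_ev hr.le hs hAB hp,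
    tsum_mul_tsum_eq_tsum_sum_antidiagonal_of_summable_norm (summable_ev_pow hr.le hs hA hp)
      (summable_ev_pow hr.le hs hB hp)]
  refine tsum_congr fun k => ?_
  unfold mulA
  have hsa := fun i => summable_of_N hs (N_ne_top_of_NN hr hA i)
  have hsb := fun i => summable_of_N hs (N_ne_top_of_NN hr hB i)
  rw [ev_sum, Finset.mul_sum]
  · refine Finset.sum_congr rfl fun q hq => ?_
    rw [HasAntidiagonal.mem_antidiagonal] at hq
    rw [ev_conv (hsa _) (hsb _), ← hq, pow_add]
    ring
  · intro q _
    refine summable_of_N hs (ne_top_of_le_ne_top ?_ (N_conv_le hs _ _))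
    exact ENNReal.mul_ne_top (N_ne_top_of_NN hr hA _) (N_ne_top_of_NN hr hB _)

end eval

end MEP

namespace MEP
open scoped ENNReal BigOperators NNReal
open Finset

/-! ## Part E : derivatives and analyticity of evaluated arrays -/

section deriv
variable {m : ℕ}

lemma mul_pow_le_aux {r r' : ℝ} (h0 : 0 ≤ r') (h : r' ≤ r) (k : ℕ) :
    k * r' ^ (k - 1) * (r - r') + r' ^ k ≤ r ^ k := by
  induction k with
  | zero => simp
  | succ k ih =>
    have h1 : (k : ℝ) * r' ^ k = r' * (k * r' ^ (k - 1)) := by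
      rcases k with _ | k
      · simp
      · simp only [Nat.add_sub_cancel, pow_succ]; ring
    have h2 : 0 ≤ (k * r' ^ (k - 1)) * (r - r') := by
      have : 0 ≤ r - r' := by linarith
      positivity
    have h3 : r' * ((k * r' ^ (k - 1)) * (r - r')) ≤ r * ((k * r' ^ (k - 1)) * (r - r')) :=
      mul_le_mul_of_nonneg_right h h2
    have h4 := mul_le_mul_of_nonneg_left ih (h0.trans h)
    simp only [Nat.add_sub_cancel]
    push_cast
    calc ((k : ℝ) + 1) * r' ^ k * (r - r') + r' ^ (k + 1)
        = r' * ((k * r' ^ (k - 1)) * (r - r')) + r * r' ^ k := by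
          rw [add_mul, h1]; ring
      _ ≤ r * (k * r' ^ (k - 1) * (r - r') + r' ^ k) := by linarith
      _ ≤ r * r ^ k := h4
      _ = _ := by ring

lemma mul_pow_le {r r' : ℝ} (h0 : 0 ≤ r') (h : r' < r) (k : ℕ) :
    k * r' ^ (k - 1) ≤ (r - r')⁻¹ * r ^ k := by
  have h1 := mul_pow_le_aux h0 h.le k
  have h2 : 0 ≤ r' ^ k := by positivity
  have h3 : 0 < r - r' := by linarith
  rw [inv_mul_eq_div, le_div_iff₀ h3]
  linarith

/-- array of the time derivative -/
noncomputable def dt (A : ℕ → (Fin m → ℤ) → ℂ) : ℕ → (Fin m → ℤ) → ℂ :=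
  fun k => ((k : ℂ) + 1) • A (k + 1)

/-- array of the space derivative -/
noncomputable def dxA (j : Fin m) (A : ℕ → (Fin m → ℤ) → ℂ) : ℕ → (Fin m → ℤ) → ℂ :=
  fun k => dx j (A k)

lemma NN_dt {r r' s : ℝ} (h0 : 0 ≤ r') (h : r' < r) {A : ℕ → (Fin m → ℤ) → ℂ}
    (hA : NN r s A ≠ ∞) : NN r' s (dt A) ≠ ∞ := by
  have h3 : 0 < r - r' := by linarith
  have : NN r' s (dt A) ≤ ENNReal.ofReal (r - r')⁻¹ * NN r s A := by
    unfold NN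
    rw [← ENNReal.tsum_mul_left]
    calc _ ≤ ∑' k, ENNReal.ofReal (r - r')⁻¹ * (ENNReal.ofReal (r ^ (k + 1)) * N s (A (k + 1))) := by
          refine ENNReal.tsum_le_tsum fun k => ?_
          unfold dt
          rw [N_smul, ← mul_assoc, ← mul_assoc]
          refine mul_le_mul_left ?_ _
          have e : ‖((k : ℂ) + 1)‖ₑ = ENNReal.ofReal ((k : ℝ) + 1) := by
            rw [← ofReal_norm]
            congr 1
            have : ((k : ℂ) + 1) = ((k + 1 : ℕ) : ℂ) := by push_cast; rfl
            rw [this, Complex.norm_natCast]; push_cast; rfl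
          rw [e, ← ENNReal.ofReal_mul (by positivity), ← ENNReal.ofReal_mul (by positivity)]
          refine ENNReal.ofReal_le_ofReal ?_
          have := mul_pow_le h0 h (k + 1)
          simp only [Nat.add_sub_cancel] at this
          push_cast at this
          linarith
      _ ≤ _ := ENNReal.tsum_comp_le_tsum_of_injective (add_left_injective 1)
          (fun k => ENNReal.ofReal (r - r')⁻¹ * (ENNReal.ofReal (r ^ k) * N s (A k)))
  exact ne_top_of_le_ne_top (ENNReal.mul_ne_top ENNReal.ofReal_ne_top hA) this

lemma NN_dxA {r s s' : ℝ} (h : s' < s) {A : ℕ → (Fin m → ℤ) → ℂ} (j : Fin m)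
    (hA : NN r s A ≠ ∞) : NN r s' (dxA j A) ≠ ∞ := by
  have : NN r s' (dxA j A) ≤ ENNReal.ofReal (2 * Real.pi / (s - s')) * NN r s A := by
    unfold NN
    rw [← ENNReal.tsum_mul_left]
    refine ENNReal.tsum_le_tsum fun k => ?_
    have := N_dx_le (s := s') (sub_pos.2 h) j (A k)
    rw [add_sub_cancel] at this
    refine (mul_le_mul_right this _).trans (le_of_eq ?_)
    ring
  exact ne_top_of_le_ne_top (ENNReal.mul_ne_top ENNReal.ofReal_ne_top hA) this

/-- derivative of a single term -/
noncomputable def dterm (A : ℕ → (Fin m → ℤ) → ℂ) (q : ℕ × (Fin m → ℤ))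
    (p : ℝ × EuclideanSpace ℝ (Fin m)) : ℝ × EuclideanSpace ℝ (Fin m) →L[ℝ] ℂ :=
  (ContinuousLinearMap.fst ℝ ℝ (EuclideanSpace ℝ (Fin m))).smulRight
      (A q.1 q.2 * (q.1 * (p.1 : ℂ) ^ (q.1 - 1)) * ex q.2 p.2) +
    ((lin q.2).comp (ContinuousLinearMap.snd ℝ ℝ (EuclideanSpace ℝ (Fin m)))).smulRight
      (A q.1 q.2 * (p.1 : ℂ) ^ q.1 * (2 * Real.pi * Complex.I * ex q.2 p.2))

lemma hasFDerivAt_term (A : ℕ → (Fin m → ℤ) → ℂ) (q : ℕ × (Fin m → ℤ))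
    (p : ℝ × EuclideanSpace ℝ (Fin m)) :
    HasFDerivAt (fun p : ℝ × EuclideanSpace ℝ (Fin m) =>
      A q.1 q.2 * (p.1 : ℂ) ^ q.1 * ex q.2 p.2) (dterm A q p) p := by
  have h1 : HasFDerivAt (fun p : ℝ × EuclideanSpace ℝ (Fin m) => (p.1 : ℂ))
      (Complex.ofRealCLM.comp (ContinuousLinearMap.fst ℝ ℝ (EuclideanSpace ℝ (Fin m)))) p :=
    Complex.ofRealCLM.hasFDerivAt.comp p hasFDerivAt_fst
  have h2 : HasFDerivAt (fun p : ℝ × EuclideanSpace ℝ (Fin m) => ((lin q.2 p.2 : ℝ) : ℂ))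
      (Complex.ofRealCLM.comp ((lin q.2).comp
        (ContinuousLinearMap.snd ℝ ℝ (EuclideanSpace ℝ (Fin m))))) p :=
    Complex.ofRealCLM.hasFDerivAt.comp p ((lin q.2).hasFDerivAt.comp p hasFDerivAt_snd)
  have h3 := (h2.const_mul (2 * Real.pi * Complex.I : ℂ)).cexp
  have h4 := ((h1.pow q.1).const_mul (A q.1 q.2)).mul h3
  refine h4.congr_fderiv ?_
  ext w
  · simp [dterm, ex]
    ring
  · simp [dterm, ex]
    ring

lemma norm_dterm_le {r r' s : ℝ} (h0 : 0 ≤ r') (h : r' < r) (hs : 0 < s)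
    (A : ℕ → (Fin m → ℤ) → ℂ) (q : ℕ × (Fin m → ℤ))
    {p : ℝ × EuclideanSpace ℝ (Fin m)} (hp : |p.1| ≤ r') :
    ‖dterm A q p‖ ≤ ((r - r')⁻¹ + 2 * Real.pi / s) *
      (‖A q.1 q.2‖ * r ^ q.1 * Real.exp (s * wt q.2)) := by
  have hr : 0 ≤ r := h0.trans h.le
  have h3 : 0 < r - r' := by linarith
  have hw := wt_nonneg q.2
  have hexp : 1 ≤ Real.exp (s * wt q.2) := Real.one_le_exp (mul_nonneg hs.le hw)
  unfold dterm
  refine (norm_add_le _ _).trans ?_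
  rw [add_mul, ContinuousLinearMap.norm_smulRight_apply, ContinuousLinearMap.norm_smulRight_apply]
  refine add_le_add ?_ ?_
  · have n1 : ‖ContinuousLinearMap.fst ℝ ℝ (EuclideanSpace ℝ (Fin m))‖ ≤ 1 :=
      ContinuousLinearMap.norm_fst_le ..
    have n2 : ‖A q.1 q.2 * (q.1 * (p.1 : ℂ) ^ (q.1 - 1)) * ex q.2 p.2‖ ≤
        ‖A q.1 q.2‖ * ((r - r')⁻¹ * r ^ q.1) := by
      simp only [norm_mul, norm_ex, norm_pow, Complex.norm_real, Real.norm_eq_abs, mul_one,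
        Complex.norm_natCast]
      refine mul_le_mul_of_nonneg_left ?_ (norm_nonneg _)
      refine le_trans ?_ (mul_pow_le h0 h q.1)
      exact mul_le_mul_of_nonneg_left (pow_le_pow_left₀ (abs_nonneg _) hp _) (by positivity)
    calc _ ≤ 1 * (‖A q.1 q.2‖ * ((r - r')⁻¹ * r ^ q.1)) :=
          mul_le_mul n1 n2 (norm_nonneg _) zero_le_one
      _ = (r - r')⁻¹ * (‖A q.1 q.2‖ * r ^ q.1) * 1 := by ring
      _ ≤ (r - r')⁻¹ * (‖A q.1 q.2‖ * r ^ q.1) * Real.exp (s * wt q.2) := by gcongr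
      _ = _ := by ring
  · have n1 : ‖(lin q.2).comp (ContinuousLinearMap.snd ℝ ℝ (EuclideanSpace ℝ (Fin m)))‖ ≤
        wt q.2 := by
      refine (ContinuousLinearMap.opNorm_comp_le _ _).trans ?_
      have := ContinuousLinearMap.norm_snd_le ℝ ℝ (EuclideanSpace ℝ (Fin m))
      calc _ ≤ wt q.2 * 1 := mul_le_mul (norm_lin_le _) this (norm_nonneg _) hw
        _ = _ := mul_one _
    have n2 : ‖A q.1 q.2 * (p.1 : ℂ) ^ q.1 * (2 * Real.pi * Complex.I * ex q.2 p.2)‖ ≤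
        ‖A q.1 q.2‖ * r ^ q.1 * (2 * Real.pi) := by
      simp only [norm_mul, norm_ex, norm_pow, Complex.norm_real, Real.norm_eq_abs, mul_one,
        Complex.norm_I, Complex.norm_ofNat, abs_of_pos Real.pi_pos]
      gcongr
      exact hp.trans h.le
    have hw2 : wt q.2 ≤ Real.exp (s * wt q.2) / s := by
      rw [le_div_iff₀ hs]
      have := Real.add_one_le_exp (s * wt q.2)
      linarith
    calc _ ≤ wt q.2 * (‖A q.1 q.2‖ * r ^ q.1 * (2 * Real.pi)) :=
          mul_le_mul n1 n2 (norm_nonneg _) hw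
      _ ≤ (Real.exp (s * wt q.2) / s) * (‖A q.1 q.2‖ * r ^ q.1 * (2 * Real.pi)) := by gcongr
      _ = _ := by ring

lemma F_hasFDerivAt {r s : ℝ} (hs : 0 < s) {A : ℕ → (Fin m → ℤ) → ℂ}
    (hA : NN r s A ≠ ∞) {p : ℝ × EuclideanSpace ℝ (Fin m)} (hp : |p.1| < r) :
    HasFDerivAt (F A) (∑' q, dterm A q p) p ∧ Summable (fun q => dterm A q p) := by
  obtain ⟨r', hr', hr'r⟩ := exists_between hp
  have h0 : 0 ≤ r' := (abs_nonneg _).trans hr'.le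
  have hr : 0 ≤ r := h0.trans hr'r.le
  have hu : Summable fun q : ℕ × (Fin m → ℤ) => ((r - r')⁻¹ + 2 * Real.pi / s) *
      (‖A q.1 q.2‖ * r ^ q.1 * Real.exp (s * wt q.2)) := (summable_of_NN hr hA).mul_left _
  have hset : {y : ℝ × EuclideanSpace ℝ (Fin m) | |y.1| < r'} = Set.Ioo (-r') r' ×ˢ Set.univ := by
    ext y; simp [abs_lt]
  refine ⟨?_, Summable.of_norm_bounded hu fun q => norm_dterm_le h0 hr'r hs A q hr'.le⟩
  refine hasFDerivAt_tsum_of_isPreconnected (s := {y : ℝ × EuclideanSpace ℝ (Fin m) | |y.1| < r'}) (x₀ := p) hu ?_ ?_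
    (fun q x _ => hasFDerivAt_term A q x)
    (fun q x hx => norm_dterm_le h0 hr'r hs A q (le_of_lt hx)) hr'
    (summable_F_norm hr hs.le hA hp.le).of_norm hr'
  · rw [hset]; exact isOpen_Ioo.prod isOpen_univ
  · rw [hset]; exact isPreconnected_Ioo.prod isPreconnected_univ

lemma fderiv_F_apply {r s : ℝ} (hs : 0 < s) {A : ℕ → (Fin m → ℤ) → ℂ}
    (hA : NN r s A ≠ ∞) {p : ℝ × EuclideanSpace ℝ (Fin m)} (hp : |p.1| < r)
    (w : ℝ × EuclideanSpace ℝ (Fin m)) :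
    fderiv ℝ (F A) p w = ∑' q, dterm A q p w := by
  obtain ⟨h1, h2⟩ := F_hasFDerivAt hs hA hp
  rw [h1.fderiv]
  exact ((ContinuousLinearMap.apply ℝ ℂ w).map_tsum h2)

lemma fderiv_F_t {r s : ℝ} (hs : 0 < s) {A : ℕ → (Fin m → ℤ) → ℂ}
    (hA : NN r s A ≠ ∞) {p : ℝ × EuclideanSpace ℝ (Fin m)} (hp : |p.1| < r) :
    fderiv ℝ (F A) p (1, 0) = F (dt A) p := by
  rw [fderiv_F_apply hs hA hp]
  unfold F
  let g : ℕ × (Fin m → ℤ) → ℕ × (Fin m → ℤ) := fun q => (q.1 + 1, q.2)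
  have hg : Function.Injective g := by
    rintro ⟨a, b⟩ ⟨c, d⟩ h
    simp only [g, Prod.mk.injEq, add_left_inj] at h
    exact Prod.ext h.1 h.2
  rw [← hg.tsum_eq]
  · refine tsum_congr fun q => ?_
    simp [g, dterm, dt]
    left
    ring
  · rintro ⟨k, ξ⟩ hk
    rcases k with _ | k
    · simp [dterm] at hk
    · exact ⟨(k, ξ), rfl⟩

lemma fderiv_F_x {r s : ℝ} (hs : 0 < s) {A : ℕ → (Fin m → ℤ) → ℂ}
    (hA : NN r s A ≠ ∞) {p : ℝ × EuclideanSpace ℝ (Fin m)} (hp : |p.1| < r) (j : Fin m) :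
    fderiv ℝ (F A) p (0, EuclideanSpace.single j 1) = F (dxA j A) p := by
  rw [fderiv_F_apply hs hA hp]
  unfold F
  refine tsum_congr fun q => ?_
  simp [dterm, dxA, dx, lin_single]
  ring

/-! ### analyticity -/

/-- Taylor series at `(0, x₀)` of a single term -/
noncomputable def pterm (A : ℕ → (Fin m → ℤ) → ℂ) (x₀ : EuclideanSpace ℝ (Fin m))
    (q : ℕ × (Fin m → ℤ)) : FormalMultilinearSeries ℝ (ℝ × EuclideanSpace ℝ (Fin m)) ℂ :=
  fun n => if q.1 ≤ n then
    ((ContinuousMultilinearMap.mkPiAlgebra ℝ (Fin n) ℝ).compContinuousLinearMap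
      (fun i : Fin n => if (i : ℕ) < q.1 then
        ContinuousLinearMap.fst ℝ ℝ (EuclideanSpace ℝ (Fin m))
        else (lin q.2).comp (ContinuousLinearMap.snd ℝ ℝ (EuclideanSpace ℝ (Fin m))))).smulRight
      (A q.1 q.2 * ex q.2 x₀ * ((2 * Real.pi * Complex.I) ^ (n - q.1) / (n - q.1).factorial))
    else 0

lemma prod_ite_aux (k j : ℕ) (a b : ℝ) :
    ∏ i : Fin (k + j), (if (i : ℕ) < k then a else b) = a ^ k * b ^ j := by
  rw [Fin.prod_univ_eq_prod_range (fun i => if i < k then a else b), Finset.prod_range_add]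
  congr 1
  · rw [Finset.prod_congr rfl (g := fun _ => a)]
    · simp
    · intro i hi; rw [if_pos (Finset.mem_range.1 hi)]
  · simp

lemma pterm_hasSum (A : ℕ → (Fin m → ℤ) → ℂ) (x₀ : EuclideanSpace ℝ (Fin m))
    (q : ℕ × (Fin m → ℤ)) (y : ℝ × EuclideanSpace ℝ (Fin m)) :
    HasSum (fun n => pterm A x₀ q n (fun _ => y))
      (A q.1 q.2 * ((((0 : ℝ), x₀) + y).1 : ℂ) ^ q.1 * ex q.2 (((0 : ℝ), x₀) + y).2) := by
  rw [← (add_right_injective q.1).hasSum_iff]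
  · have h1 := NormedSpace.expSeries_div_hasSum_exp (𝔸 := ℂ)
      (2 * Real.pi * Complex.I * (lin q.2 y.2 : ℝ))
    rw [← Complex.exp_eq_exp_ℂ] at h1
    have h2 := h1.mul_left (A q.1 q.2 * ex q.2 x₀ * (y.1 : ℂ) ^ q.1)
    have e1 : (fun n => pterm A x₀ q n (fun _ => y)) ∘ (fun x => q.1 + x) = fun i =>
        A q.1 q.2 * ex q.2 x₀ * (y.1 : ℂ) ^ q.1 *
          ((2 * Real.pi * Complex.I * (lin q.2 y.2 : ℝ)) ^ i / (i.factorial : ℂ)) := by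
      funext j
      simp only [Function.comp_apply, pterm, le_add_iff_nonneg_right, zero_le, if_true,
        ContinuousMultilinearMap.smulRight_apply,
        ContinuousMultilinearMap.compContinuousLinearMap_apply,
        ContinuousMultilinearMap.mkPiAlgebra_apply, Nat.add_sub_cancel_left]
      have : ∀ i : Fin (q.1 + j), (if (i : ℕ) < q.1 then
          ContinuousLinearMap.fst ℝ ℝ (EuclideanSpace ℝ (Fin m))
          else (lin q.2).comp (ContinuousLinearMap.snd ℝ ℝ (EuclideanSpace ℝ (Fin m)))) y =
          if (i : ℕ) < q.1 then y.1 else lin q.2 y.2 := by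
        intro i; split_ifs <;> simp
      simp_rw [this, prod_ite_aux]
      rw [Complex.real_smul]
      push_cast
      ring
    have e2 : A q.1 q.2 * ((((0 : ℝ), x₀) + y).1 : ℂ) ^ q.1 * ex q.2 (((0 : ℝ), x₀) + y).2 =
        A q.1 q.2 * ex q.2 x₀ * (y.1 : ℂ) ^ q.1 *
          Complex.exp (2 * Real.pi * Complex.I * (lin q.2 y.2 : ℝ)) := by
      simp only [Prod.fst_add, Prod.snd_add, zero_add, ex_add_right]
      unfold ex
      ring
    rw [e1, e2]
    exact h2
  · intro n hn
    have : ¬ q.1 ≤ n := by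
      intro h
      exact hn ⟨n - q.1, by simp; omega⟩
    simp [pterm, this]

lemma pterm_norm_le (A : ℕ → (Fin m → ℤ) → ℂ) (x₀ : EuclideanSpace ℝ (Fin m))
    (q : ℕ × (Fin m → ℤ)) (j : ℕ) :
    ‖pterm A x₀ q (q.1 + j)‖ ≤
      ‖A q.1 q.2‖ * ((2 * Real.pi * wt q.2) ^ j / j.factorial) := by
  simp only [pterm, le_add_iff_nonneg_right, zero_le, if_true, Nat.add_sub_cancel_left]
  have hw := wt_nonneg q.2
  refine ContinuousMultilinearMap.opNorm_le_bound (by positivity) fun v => ?_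
  rw [ContinuousMultilinearMap.smulRight_apply,
    ContinuousMultilinearMap.compContinuousLinearMap_apply,
    ContinuousMultilinearMap.mkPiAlgebra_apply, norm_smul, norm_prod]
  have h1 : ∏ i : Fin (q.1 + j), ‖(if (i : ℕ) < q.1 then
          ContinuousLinearMap.fst ℝ ℝ (EuclideanSpace ℝ (Fin m))
          else (lin q.2).comp (ContinuousLinearMap.snd ℝ ℝ (EuclideanSpace ℝ (Fin m)))) (v i)‖ ≤
      ∏ i : Fin (q.1 + j), ((if (i : ℕ) < q.1 then 1 else wt q.2) * ‖v i‖) := by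
    refine Finset.prod_le_prod (fun _ _ => norm_nonneg _) fun i _ => ?_
    split_ifs
    · simpa using norm_fst_le (v i)
    · refine ((lin q.2).le_opNorm _).trans ?_
      exact mul_le_mul (norm_lin_le _) (norm_snd_le (v i)) (norm_nonneg _) hw
  rw [Finset.prod_mul_distrib, prod_ite_aux, one_pow, one_mul] at h1
  have h2 : ‖A q.1 q.2 * ex q.2 x₀ * ((2 * Real.pi * Complex.I) ^ j / j.factorial)‖ =
      ‖A q.1 q.2‖ * ((2 * Real.pi) ^ j / j.factorial) := by
    simp only [norm_mul, norm_ex, norm_pow, Complex.norm_real, Real.norm_eq_abs, mul_one,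
        Complex.norm_I, Complex.norm_ofNat, abs_of_pos Real.pi_pos, norm_div, Complex.norm_natCast]
  rw [h2]
  calc _ ≤ (wt q.2 ^ j * ∏ i, ‖v i‖) * (‖A q.1 q.2‖ * ((2 * Real.pi) ^ j / j.factorial)) :=
        mul_le_mul_of_nonneg_right h1 (by positivity)
    _ = _ := by rw [mul_pow]; ring

lemma F_analyticAt {r s : ℝ} (hr : 0 < r) (hs : 0 < s) {A : ℕ → (Fin m → ℤ) → ℂ}
    (hA : NN r s A ≠ ∞) (hrs : 2 * Real.pi * r ≤ s)
    {p : ℝ × EuclideanSpace ℝ (Fin m)} (hp : |p.1| < r) : AnalyticAt ℝ (F A) p := by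
  have hb : ∀ q : ℕ × (Fin m → ℤ), HasSum (fun j => ‖A q.1 q.2‖ * r ^ q.1 *
      ((2 * Real.pi * wt q.2 * r) ^ j / j.factorial))
      (‖A q.1 q.2‖ * r ^ q.1 * Real.exp (2 * Real.pi * wt q.2 * r)) := by
    intro q
    have h1 := NormedSpace.expSeries_div_hasSum_exp (𝔸 := ℝ) (2 * Real.pi * wt q.2 * r)
    rw [← Real.exp_eq_exp_ℝ] at h1
    exact h1.mul_left _
  have hle : ∀ q : ℕ × (Fin m → ℤ), ∀ j, ‖pterm A p.2 q (q.1 + j)‖ * r ^ (q.1 + j) ≤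
      ‖A q.1 q.2‖ * r ^ q.1 * ((2 * Real.pi * wt q.2 * r) ^ j / j.factorial) := by
    intro q j
    calc _ ≤ ‖A q.1 q.2‖ * ((2 * Real.pi * wt q.2) ^ j / j.factorial) * r ^ (q.1 + j) :=
          mul_le_mul_of_nonneg_right (pterm_norm_le A p.2 q j) (by positivity)
      _ = _ := by rw [pow_add, mul_pow _ r]; ring
  have hz : ∀ q : ℕ × (Fin m → ℤ), ∀ n ∉ Set.range (q.1 + ·),
      ‖pterm A p.2 q n‖ * r ^ n = 0 := by
    intro q n hn
    have : ¬ q.1 ≤ n := by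
      intro h
      exact hn ⟨n - q.1, by simp; omega⟩
    simp [pterm, this]
  have hsj : ∀ q : ℕ × (Fin m → ℤ),
      Summable fun j => ‖pterm A p.2 q (q.1 + j)‖ * r ^ (q.1 + j) := fun q =>
    Summable.of_nonneg_of_le (fun j => by positivity) (hle q) (hb q).summable
  have hsum : Summable fun z : (ℕ × (Fin m → ℤ)) × ℕ =>
      ‖pterm A p.2 z.1 z.2‖ * ((Real.toNNReal r : ℝ≥0) : ℝ) ^ z.2 := by
    rw [Real.coe_toNNReal r hr.le]
    change Summable fun z : (ℕ × (Fin m → ℤ)) × ℕ => ‖pterm A p.2 z.1 z.2‖ * r ^ z.2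
    rw [summable_prod_of_nonneg (fun z => by positivity)]
    have hfs : ∀ q : ℕ × (Fin m → ℤ), Summable fun n => ‖pterm A p.2 q n‖ * r ^ n := fun q =>
      ((add_right_injective q.1).summable_iff (hz q)).1 (hsj q)
    refine ⟨hfs, ?_⟩
    refine Summable.of_nonneg_of_le (fun q => tsum_nonneg fun n => by positivity) (fun q => ?_)
      (summable_of_NN hr.le hA)
    change ∑' n, ‖pterm A p.2 q n‖ * r ^ n ≤ _
    have e1 : ∑' n, ‖pterm A p.2 q n‖ * r ^ n =
        ∑' j, ‖pterm A p.2 q (q.1 + j)‖ * r ^ (q.1 + j) :=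
      ((add_right_injective q.1).tsum_eq (f := fun n => ‖pterm A p.2 q n‖ * r ^ n)
        (fun n hn => by by_contra h; exact hn (hz q n h))).symm
    rw [e1]
    refine ((hsj q).tsum_le_tsum (hle q) (hb q).summable).trans ?_
    rw [(hb q).tsum_eq]
    refine mul_le_mul_of_nonneg_left (Real.exp_le_exp.2 ?_) (by positivity)
    calc 2 * Real.pi * wt q.2 * r = (2 * Real.pi * r) * wt q.2 := by ring
      _ ≤ s * wt q.2 := mul_le_mul_of_nonneg_right hrs (wt_nonneg _)
  have key := hasFPowerSeriesOnBall_tsum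
    (fun (q : ℕ × (Fin m → ℤ)) (z : ℝ × EuclideanSpace ℝ (Fin m)) =>
      A q.1 q.2 * (z.1 : ℂ) ^ q.1 * ex q.2 z.2) (pterm A p.2) ((0 : ℝ), p.2) (Real.toNNReal r) (Real.toNNReal_pos.2 hr) hsum
    (fun q y _ => pterm_hasSum A p.2 q y)
  refine key.analyticAt_of_mem ?_
  rw [Metric.mem_eball, edist_dist]
  refine (ENNReal.ofReal_lt_ofReal_iff hr).2 ?_
  rw [Prod.dist_eq]
  simpa [hr] using hp

end deriv

end MEP

namespace MEP
open scoped ENNReal BigOperators NNReal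
open Finset

/-! ## Part F : Fourier expansion of analytic periodic functions -/

section fourier
variable {m : ℕ}

/-- Taylor coefficient in direction `e` -/
noncomputable def tc (f : EuclideanSpace ℝ (Fin m) → ℝ) (e : EuclideanSpace ℝ (Fin m)) (n : ℕ)
    (x : EuclideanSpace ℝ (Fin m)) : ℝ :=
  ((n.factorial : ℝ))⁻¹ * iteratedFDeriv ℝ n f x (fun _ => e)

lemma tc_local {f : EuclideanSpace ℝ (Fin m) → ℝ} {x₀ : EuclideanSpace ℝ (Fin m)}
    (hf : AnalyticAt ℝ f x₀) (e : EuclideanSpace ℝ (Fin m)) (he : ‖e‖ = 1) :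
    ∃ C ρ : ℝ, 0 < ρ ∧ ∀ x ∈ Metric.ball x₀ ρ, (∀ n, |tc f e n x| ≤ C * (ρ⁻¹) ^ n) ∧
      ∀ h : ℝ, |h| < ρ → HasSum (fun n => h ^ n * tc f e n x) (f (x + h • e)) := by
  obtain ⟨p, r, hp⟩ := hf
  obtain ⟨ρ2, h0, hr⟩ := ENNReal.lt_iff_exists_nnreal_btwn.1 hp.r_pos
  set ρ : ℝ≥0 := ρ2 / 2 with hρ
  have hρ0 : 0 < ρ := by
    have : 0 < ρ2 := by exact_mod_cast h0
    positivity
  have hρρ : ((ρ : ℝ≥0∞) + ρ) = ρ2 := by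
    rw [← ENNReal.coe_add, hρ, add_halves]
  have hrad : ((ρ : ℝ≥0∞) + ρ) < p.radius := by
    rw [hρρ]; exact hr.trans_le hp.r_le
  have hS := p.changeOriginSeries_summable_aux₁ hrad
  set S : ℝ≥0 := ∑' s : Σ k l : ℕ, { s : Finset (Fin (k + l)) // s.card = l },
      ‖p (s.1 + s.2.1)‖₊ * ρ ^ s.2.1 * ρ ^ s.1 with hSdef
  refine ⟨S, ρ, hρ0, fun x hx => ?_⟩
  obtain ⟨y, rfl⟩ : ∃ y, x = x₀ + y := ⟨x - x₀, by abel⟩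
  have hy : ‖y‖₊ < ρ := by
    have : ‖y‖ < ρ := by simpa [dist_eq_norm] using hx
    exact_mod_cast this
  have hyr : ‖y‖ₑ < r := by
    rw [enorm_eq_nnnorm]
    calc (‖y‖₊ : ℝ≥0∞) < ρ := by exact_mod_cast hy
      _ ≤ ρ + ρ := le_self_add
      _ < r := by rw [hρρ]; exact hr
  have hyrad : (‖y‖₊ : ℝ≥0∞) < p.radius := by
    rw [← enorm_eq_nnnorm]; exact hyr.trans_le hp.r_le
  have hq := hp.changeOrigin hyr
  have hρr : (ρ : ℝ≥0∞) ≤ r - ‖y‖ₑ := by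
    refine ENNReal.le_sub_of_add_le_left (by simp) ?_
    rw [enorm_eq_nnnorm]
    calc (‖y‖₊ : ℝ≥0∞) + ρ ≤ ρ + ρ := by gcongr
      _ ≤ r := by rw [hρρ]; exact hr.le
  have htc : ∀ n, tc f e n (x₀ + y) = p.changeOrigin y n (fun _ => e) := by
    intro n
    unfold tc
    have := hq.factorial_smul e n
    rw [← this, nsmul_eq_mul, inv_mul_cancel_left₀ (by positivity)]
  constructor
  · intro n
    have h1 := p.nnnorm_changeOrigin_le n hyrad
    have h2 : (∑' s : Σ l : ℕ, { s : Finset (Fin (n + l)) // s.card = l },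
        ‖p (n + s.1)‖₊ * ‖y‖₊ ^ s.1) * ρ ^ n ≤ S := by
      have hs1 := (NNReal.summable_sigma.1 hS).1 n
      have hs2 := (NNReal.summable_sigma.1 hS).2
      have e1 := hS.tsum_sigma' (fun b => (NNReal.summable_sigma.1 hS).1 b)
      rw [hSdef, e1]
      refine le_trans ?_ (hs2.le_tsum n (fun _ _ => zero_le))
      rw [← NNReal.tsum_mul_right]
      refine Summable.tsum_le_tsum (fun s => ?_) ?_ hs1
      · gcongr
      · refine NNReal.summable_of_le (fun s => ?_) hs1
        gcongr
    have h3 : ‖p.changeOrigin y n‖₊ * ρ ^ n ≤ S := le_trans (by gcongr) h2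
    have h4 : ‖p.changeOrigin y n‖ * (ρ : ℝ) ^ n ≤ S := by exact_mod_cast h3
    rw [htc]
    have h5 := (p.changeOrigin y n).le_opNorm (fun _ => e)
    simp only [he, Finset.prod_const_one, mul_one] at h5
    rw [← Real.norm_eq_abs]
    refine h5.trans ?_
    rw [inv_pow, ← div_eq_mul_inv, le_div_iff₀ (by positivity)]
    exact h4
  · intro h hh
    have hmem : h • e ∈ Metric.eball (0 : EuclideanSpace ℝ (Fin m)) (r - ‖y‖ₑ) := by
      rw [mem_eball_zero_iff]
      refine lt_of_lt_of_le ?_ hρr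
      rw [enorm_eq_nnnorm]
      have : ‖h • e‖₊ < ρ := by
        rw [← NNReal.coe_lt_coe, coe_nnnorm, norm_smul, he, mul_one]; exact hh
      exact_mod_cast this
    have := hq.hasSum hmem
    have hfun : (fun n => h ^ n * tc f e n (x₀ + y)) =
        fun n => p.changeOrigin y n (fun _ => h • e) := by
      funext n
      rw [htc, show (fun _ : Fin n => h • e) = fun i => (fun _ : Fin n => h) i • (fun _ => e) i from rfl,
        ContinuousMultilinearMap.map_smul_univ]
      simp
    rw [hfun]
    exact this

lemma tc_compact {f : EuclideanSpace ℝ (Fin m) → ℝ} (hf : ∀ x, AnalyticAt ℝ f x)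
    (e : EuclideanSpace ℝ (Fin m)) (he : ‖e‖ = 1) {K : Set (EuclideanSpace ℝ (Fin m))}
    (hK : IsCompact K) :
    ∃ C ρ : ℝ, 0 ≤ C ∧ 0 < ρ ∧ ∀ x ∈ K, (∀ n, |tc f e n x| ≤ C * (ρ⁻¹) ^ n) ∧
      ∀ h : ℝ, |h| < ρ → HasSum (fun n => h ^ n * tc f e n x) (f (x + h • e)) := by
  refine hK.induction_on (p := fun K => ∃ C ρ : ℝ, 0 ≤ C ∧ 0 < ρ ∧ ∀ x ∈ K,
      (∀ n, |tc f e n x| ≤ C * (ρ⁻¹) ^ n) ∧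
      ∀ h : ℝ, |h| < ρ → HasSum (fun n => h ^ n * tc f e n x) (f (x + h • e))) ?_ ?_ ?_ ?_
  · exact ⟨0, 1, le_rfl, one_pos, by simp⟩
  · rintro s t hst ⟨C, ρ, hC, hρ, h⟩
    exact ⟨C, ρ, hC, hρ, fun x hx => h x (hst hx)⟩
  · rintro s t ⟨C, ρ, hC, hρ, h⟩ ⟨C', ρ', hC', hρ', h'⟩
    have hm : 0 < min ρ ρ' := lt_min hρ hρ'
    have i1 : ρ⁻¹ ≤ (min ρ ρ')⁻¹ := inv_anti₀ hm (min_le_left _ _)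
    have i2 : ρ'⁻¹ ≤ (min ρ ρ')⁻¹ := inv_anti₀ hm (min_le_right _ _)
    refine ⟨C + C', min ρ ρ', by positivity, hm, ?_⟩
    rintro x (hx | hx)
    · refine ⟨fun n => ((h x hx).1 n).trans ?_,
        fun k hk => (h x hx).2 k (hk.trans_le (min_le_left _ _))⟩
      have := pow_le_pow_left₀ (by positivity) i1 n
      exact mul_le_mul (by linarith) this (by positivity) (by positivity)
    · refine ⟨fun n => ((h' x hx).1 n).trans ?_,
        fun k hk => (h' x hx).2 k (hk.trans_le (min_le_right _ _))⟩
      have := pow_le_pow_left₀ (by positivity) i2 n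
      exact mul_le_mul (by linarith) this (by positivity) (by positivity)
  · intro x _
    obtain ⟨C, ρ, hρ, h⟩ := tc_local (hf x) e he
    refine ⟨Metric.ball x ρ, mem_nhdsWithin_of_mem_nhds (Metric.ball_mem_nhds x hρ), C, ρ, ?_, hρ, h⟩
    have := (h x (Metric.mem_ball_self hρ)).1 0
    simp only [pow_zero, mul_one] at this
    exact (abs_nonneg _).trans this

/-- projection to the torus -/
noncomputable def proj (x : EuclideanSpace ℝ (Fin m)) : UnitAddTorus (Fin m) :=
  fun i => ((x i : ℝ) : UnitAddCircle)

/-- a representative of a point of the torus -/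
noncomputable def rep (y : UnitAddTorus (Fin m)) : EuclideanSpace ℝ (Fin m) :=
  WithLp.toLp 2 fun i => (AddCircle.equivIoc 1 0 (y i) : ℝ)

lemma proj_rep (y : UnitAddTorus (Fin m)) : proj (rep y) = y := by
  funext i
  exact (AddCircle.equivIoc 1 0).symm_apply_apply (y i)

lemma proj_add (x y : EuclideanSpace ℝ (Fin m)) : proj (x + y) = proj x + proj y := by
  funext i; simp [proj]

/-- integer vector -/
noncomputable def ivec (z : Fin m → ℤ) : EuclideanSpace ℝ (Fin m) :=
  (WithLp.equiv 2 (Fin m → ℝ)).symm fun i => (z i : ℝ)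

lemma proj_eq {x y : EuclideanSpace ℝ (Fin m)} (h : proj x = proj y) : ∃ z, x = y + ivec z := by
  have : ∀ i, ∃ z : ℤ, x i = y i + z := by
    intro i
    have h1 : ((x i : ℝ) : UnitAddCircle) = ((y i : ℝ) : UnitAddCircle) := congrFun h i
    rw [← sub_eq_zero, ← AddCircle.coe_sub, AddCircle.coe_eq_zero_iff] at h1
    obtain ⟨z, hz⟩ := h1
    refine ⟨z, ?_⟩
    simp only [zsmul_eq_mul, mul_one] at hz
    linarith
  choose z hz using this
  refine ⟨z, ?_⟩
  ext i
  simp [ivec, hz]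

lemma proj_quot : IsOpenQuotientMap (proj (m := m)) := by
  have h1 : IsOpenQuotientMap (fun (x : Fin m → ℝ) (i : Fin m) => ((x i : ℝ) : UnitAddCircle)) :=
    IsOpenQuotientMap.piMap (fun _ => QuotientAddGroup.isOpenQuotientMap_mk)
  exact h1.comp (PiLp.homeomorph 2 (fun _ : Fin m => ℝ)).isOpenQuotientMap

/-- periodicity -/
def Per {α : Type*} (f : EuclideanSpace ℝ (Fin m) → α) : Prop := ∀ x z, f (x + ivec z) = f x

lemma Per.rep {α : Type*} {f : EuclideanSpace ℝ (Fin m) → α} (hf : Per f)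
    (x : EuclideanSpace ℝ (Fin m)) : f (rep (proj x)) = f x := by
  obtain ⟨z, hz⟩ := proj_eq (proj_rep (proj x))
  rw [hz, hf]

lemma Per.continuous_rep {α : Type*} [TopologicalSpace α] {f : EuclideanSpace ℝ (Fin m) → α}
    (hf : Per f) (hc : Continuous f) : Continuous (fun y => f (MEP.rep y)) := by
  rw [proj_quot.isQuotientMap.continuous_iff]
  convert hc using 1
  funext x
  exact hf.rep x

lemma Per.tc {f : EuclideanSpace ℝ (Fin m) → ℝ} (hf : Per f) (e : EuclideanSpace ℝ (Fin m)) (n : ℕ) :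
    Per (tc f e n) := by
  intro x z
  unfold MEP.tc
  rw [← iteratedFDeriv_comp_add_right]
  congr 3
  funext x
  exact hf x z

/-- the cube -/
def cube (m : ℕ) : Set (EuclideanSpace ℝ (Fin m)) :=
  (PiLp.homeomorph 2 (fun _ : Fin m => ℝ)) ⁻¹' (Set.univ.pi fun _ => Set.Icc 0 1)

lemma cube_compact : IsCompact (cube m) :=
  (PiLp.homeomorph 2 (fun _ : Fin m => ℝ)).isCompact_preimage.2
    (isCompact_univ_pi fun _ => isCompact_Icc)

lemma rep_mem_cube (y : UnitAddTorus (Fin m)) : rep y ∈ cube m := by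
  intro i _
  have := (AddCircle.equivIoc (1:ℝ) 0 (y i)).2
  exact ⟨this.1.le, this.2.trans (by simp)⟩

lemma mFourier_proj (ξ : Fin m → ℤ) (x : EuclideanSpace ℝ (Fin m)) :
    UnitAddTorus.mFourier ξ (proj x) = ex ξ x := by
  simp only [UnitAddTorus.mFourier, ContinuousMap.coe_mk, proj, fourier_coe_apply, ex, lin_apply]
  rw [← Complex.exp_sum]
  congr 1
  push_cast
  rw [Finset.mul_sum]
  refine Finset.sum_congr rfl fun i _ => ?_
  simp
  ring

/-- normalized Haar measure of the torus -/
noncomputable def haarT (m : ℕ) : MeasureTheory.Measure (UnitAddTorus (Fin m)) :=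
  MeasureTheory.Measure.pi fun _ => AddCircle.haarAddCircle

instance : MeasureTheory.IsProbabilityMeasure (haarT m) := by
  unfold haarT; infer_instance

instance : MeasureTheory.Measure.IsAddLeftInvariant (haarT m) := by
  unfold haarT; infer_instance

instance : MeasureTheory.Measure.IsAddRightInvariant (haarT m) := by
  unfold haarT; infer_instance

lemma mFourierCoeff_eq (f : UnitAddTorus (Fin m) → ℂ) (ξ : Fin m → ℤ) :
    UnitAddTorus.mFourierCoeff f ξ = ∫ t, UnitAddTorus.mFourier (-ξ) t * f t ∂(haarT m) := rfl


lemma coeff_shift {f : EuclideanSpace ℝ (Fin m) → ℝ} (hper : Per f) (ξ : Fin m → ℤ)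
    (w : EuclideanSpace ℝ (Fin m)) :
    ex ξ w * UnitAddTorus.mFourierCoeff (fun y => (f (rep y) : ℂ)) ξ =
      ∫ y, UnitAddTorus.mFourier (-ξ) y * (f (rep y + w) : ℂ) ∂(haarT m) := by
  rw [mFourierCoeff_eq, ← MeasureTheory.integral_add_right_eq_self _ (proj w),
    ← MeasureTheory.integral_const_mul]
  refine MeasureTheory.integral_congr_ae (Filter.Eventually.of_forall fun y => ?_)
  have e1 : y + proj w = proj (rep y + w) := by rw [proj_add, proj_rep]
  have e2 : UnitAddTorus.mFourier (-ξ) y = ex (-ξ) (rep y) := by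
    rw [← mFourier_proj, proj_rep]
  have e3 : ex ξ w * ex (-ξ) w = 1 := by
    rw [← ex_add_left, add_neg_cancel]; simp [ex, lin_apply]
  simp only
  rw [e2, e1, mFourier_proj, hper.rep, ex_add_right]
  calc _ = (ex ξ w * ex (-ξ) w) * (ex (-ξ) (rep y) * (f (rep y + w) : ℂ)) := by ring
    _ = _ := by rw [e3, one_mul]

lemma coeff_decay {f : EuclideanSpace ℝ (Fin m) → ℝ} (hf : ∀ x, AnalyticAt ℝ f x) (hper : Per f)
    (j : Fin m) : ∃ C c : ℝ, 0 ≤ C ∧ 0 < c ∧ ∀ ξ,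
      ‖UnitAddTorus.mFourierCoeff (fun y => (f (rep y) : ℂ)) ξ‖ ≤ C * Real.exp (-(c * |(ξ j : ℝ)|)) := by
  have he : ‖(EuclideanSpace.single j (1 : ℝ) : EuclideanSpace ℝ (Fin m))‖ = 1 := by simp
  set e : EuclideanSpace ℝ (Fin m) := EuclideanSpace.single j (1 : ℝ) with hedef
  obtain ⟨C, ρ, hC, hρ, h⟩ := tc_compact hf e he (cube_compact (m := m))
  have hcd : ContDiff ℝ ⊤ f := contDiff_iff_contDiffAt.2 fun x => (hf x).contDiffAt
  have hcont : ∀ n, Continuous fun y => ((tc f e n (rep y) : ℝ) : ℂ) := fun n => by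
    refine Complex.continuous_ofReal.comp ((hper.tc e n).continuous_rep ?_)
    unfold tc
    have : Continuous fun x => iteratedFDeriv ℝ n f x :=
      hcd.continuous_iteratedFDeriv (by exact_mod_cast le_top)
    exact continuous_const.mul (this.eval_const _)
  refine ⟨2 * C, 2 * Real.pi * (ρ / 2), by positivity, by positivity, fun ξ => ?_⟩
  set a := UnitAddTorus.mFourierCoeff (fun y => (f (rep y) : ℂ)) ξ with ha
  let d : ℕ → ℂ := fun n =>
    ∫ y, UnitAddTorus.mFourier (-ξ) y * ((tc f e n (rep y) : ℝ) : ℂ) ∂(haarT m)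
  have hbd : ∀ n y, ‖UnitAddTorus.mFourier (-ξ) y * ((tc f e n (rep y) : ℝ) : ℂ)‖ ≤ C * (ρ⁻¹) ^ n := by
    intro n y
    rw [norm_mul, ← proj_rep y, mFourier_proj, norm_ex, one_mul, proj_rep, Complex.norm_real]
    exact (h _ (rep_mem_cube y)).1 n
  have hIntg : ∀ n, MeasureTheory.Integrable
      (fun y => UnitAddTorus.mFourier (-ξ) y * ((tc f e n (rep y) : ℝ) : ℂ)) (haarT m) := by
    intro n
    refine MeasureTheory.Integrable.of_bound (C := C * (ρ⁻¹) ^ n) ?_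
      (Filter.Eventually.of_forall (hbd n))
    exact ((UnitAddTorus.mFourier (-ξ)).continuous.mul (hcont n)).aestronglyMeasurable
  have hd : ∀ n, ‖d n‖ ≤ C * (ρ⁻¹) ^ n := by
    intro n
    have := MeasureTheory.norm_integral_le_of_norm_le_const (μ := haarT m)
      (Filter.Eventually.of_forall (hbd n))
    simpa using this
  -- expansion for real shifts
  have hreal : ∀ t : ℝ, |t| < ρ → HasSum (fun n => d n * (t : ℂ) ^ n)
      (Complex.exp (2 * Real.pi * Complex.I * (ξ j) * t) * a) := by
    intro t ht
    have e1 : Complex.exp (2 * Real.pi * Complex.I * (ξ j) * t) = ex ξ (t • e) := by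
      unfold ex
      rw [map_smul, hedef, lin_single]
      congr 1
      push_cast [smul_eq_mul]
      ring
    have h1 := coeff_shift hper ξ (t • e)
    rw [e1, ha, h1]
    have hIntg' : ∀ n, MeasureTheory.Integrable
      (fun y => (UnitAddTorus.mFourier (-ξ) y * ((tc f e n (rep y) : ℝ) : ℂ)) * (t : ℂ) ^ n)
        (haarT m) := fun n => (hIntg n).mul_const _
    have h2 := MeasureTheory.hasSum_integral_of_summable_integral_norm hIntg' ?_
    · have e2 : (fun n => d n * (t : ℂ) ^ n) = fun n => ∫ y,
          (UnitAddTorus.mFourier (-ξ) y * ((tc f e n (rep y) : ℝ) : ℂ)) * (t : ℂ) ^ n ∂(haarT m) := by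
        funext n
        rw [MeasureTheory.integral_mul_const]
      rw [e2]
      convert! h2 using 1
      refine MeasureTheory.integral_congr_ae (Filter.Eventually.of_forall fun y => ?_)
      have h3 := (h _ (rep_mem_cube y)).2 t ht
      have h4 := (Complex.hasSum_ofReal.2 h3).mul_left (UnitAddTorus.mFourier (-ξ) y)
      simp only
      rw [← h4.tsum_eq]
      refine tsum_congr fun n => ?_
      push_cast
      ring
    · refine Summable.of_nonneg_of_le (fun n => MeasureTheory.integral_nonneg fun _ => norm_nonneg _)
        (fun n => ?_) ((summable_geometric_of_lt_one (r := |t| / ρ) (by positivity)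
          ((div_lt_one hρ).2 ht)).mul_left C)
      have : ∫ y, ‖UnitAddTorus.mFourier (-ξ) y * ((tc f e n (rep y) : ℝ) : ℂ) * (t : ℂ) ^ n‖ ∂(haarT m)
          ≤ ∫ y, C * (|t| / ρ) ^ n ∂(haarT m) := by
        refine MeasureTheory.integral_mono (hIntg' n).norm (MeasureTheory.integrable_const _) fun y => ?_
        simp only
        rw [norm_mul, norm_pow, Complex.norm_real, Real.norm_eq_abs]
        refine (mul_le_mul_of_nonneg_right (hbd n y) (by positivity)).trans (le_of_eq ?_)
        rw [div_pow, inv_pow]; ring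
      simpa using this
  -- complex extension
  have hGd : ∀ z : ℂ, ∀ n, ‖d n * z ^ n‖ ≤ C * (‖z‖ / ρ) ^ n := by
    intro z n
    rw [norm_mul, norm_pow]
    refine (mul_le_mul_of_nonneg_right (hd n) (by positivity)).trans (le_of_eq ?_)
    rw [div_pow, inv_pow]; ring
  have hGan : AnalyticOnNhd ℂ (fun z : ℂ => ∑' n, d n * z ^ n) (Metric.ball 0 ρ) := by
    intro z hz
    rw [mem_ball_zero_iff] at hz
    obtain ⟨ρ', h1, h2⟩ := exists_between hz
    have hρ' : 0 < ρ' := (norm_nonneg _).trans_lt h1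
    have : DifferentiableOn ℂ (fun z : ℂ => ∑' n, d n * z ^ n) (Metric.ball 0 ρ') := by
      refine Complex.differentiableOn_tsum_of_summable_norm
        ((summable_geometric_of_lt_one (r := ρ' / ρ) (by positivity)
          ((div_lt_one hρ).2 h2)).mul_left C) (fun n => by fun_prop) Metric.isOpen_ball ?_
      intro n w hw
      rw [mem_ball_zero_iff] at hw
      refine (hGd w n).trans ?_
      gcongr
    exact this.analyticAt (Metric.isOpen_ball.mem_nhds (by simpa using h1))
  have hHan : AnalyticOnNhd ℂ (fun z : ℂ => Complex.exp (2 * Real.pi * Complex.I * (ξ j) * z) * a)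
      (Metric.ball 0 ρ) := by
    have : Differentiable ℂ (fun z : ℂ => Complex.exp (2 * Real.pi * Complex.I * (ξ j) * z) * a) := by
      fun_prop
    exact fun z _ => this.analyticAt z
  have hfreq : ∃ᶠ z in nhdsWithin (0 : ℂ) {0}ᶜ, (∑' n, d n * z ^ n) =
      Complex.exp (2 * Real.pi * Complex.I * (ξ j) * z) * a := by
    have ht : Filter.Tendsto (fun t : ℝ => (t : ℂ)) (nhdsWithin 0 {0}ᶜ) (nhdsWithin 0 {0}ᶜ) := by
      refine tendsto_nhdsWithin_iff.2 ⟨?_, ?_⟩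
      · exact (Complex.continuous_ofReal.tendsto' 0 0 (by simp)).mono_left nhdsWithin_le_nhds
      · filter_upwards [self_mem_nhdsWithin] with t ht
        simpa using ht
    refine ht.frequently (Filter.Eventually.frequently ?_)
    filter_upwards [mem_nhdsWithin_of_mem_nhds (Metric.ball_mem_nhds (0 : ℝ) hρ)] with t ht
    exact (hreal t (by simpa using ht)).tsum_eq
  have hEq := hGan.eqOn_of_preconnected_of_frequently_eq hHan
    (convex_ball (0 : ℂ) ρ).isPreconnected (Metric.mem_ball_self hρ) hfreq
  have hfin : ∀ τ : ℝ, |τ| = 1 → ‖a‖ * Real.exp (2 * Real.pi * (ρ / 2) * (τ * ξ j)) ≤ 2 * C := by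
    intro τ hτ
    have hz : ‖(-Complex.I * (τ * (ρ / 2) : ℝ) : ℂ)‖ = ρ / 2 := by
      rw [norm_mul, norm_neg, Complex.norm_I, Complex.norm_real, Real.norm_eq_abs, abs_mul, hτ,
        abs_of_pos (by positivity)]
      ring
    have h1 := hEq (x := -Complex.I * (τ * (ρ / 2) : ℝ)) (by
      rw [mem_ball_zero_iff, hz]; linarith)
    simp only at h1
    have h2 : ‖∑' n, d n * (-Complex.I * (τ * (ρ / 2) : ℝ)) ^ n‖ ≤ 2 * C := by
      refine tsum_of_norm_bounded (g := fun n => C * (1 / 2) ^ n) ?_ fun n => ?_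
      · rw [mul_comm 2 C]; exact hasSum_geometric_two.mul_left C
      · refine (hGd _ n).trans (le_of_eq ?_)
        rw [hz]; congr 2; field_simp
    rw [h1, norm_mul, Complex.norm_exp, mul_comm] at h2
    convert h2 using 3
    have : (2 * Real.pi * Complex.I * (ξ j) * (-Complex.I * (τ * (ρ / 2) : ℝ)) : ℂ) =
        ((2 * Real.pi * (ρ / 2) * (τ * ξ j) : ℝ) : ℂ) := by
      push_cast
      linear_combination (-(2 * Real.pi * (ξ j) * (τ * (ρ / 2))) : ℂ) * Complex.I_mul_I
    rw [this, Complex.ofReal_re]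
  have hfin2 : ‖a‖ * Real.exp (2 * Real.pi * (ρ / 2) * |(ξ j : ℝ)|) ≤ 2 * C := by
    rcases abs_cases (ξ j : ℝ) with ⟨h1, _⟩ | ⟨h1, _⟩
    · rw [h1]; simpa using hfin 1 (by simp)
    · rw [h1]; simpa using hfin (-1) (by simp)
  rw [Real.exp_neg, ← div_eq_mul_inv, le_div_iff₀ (Real.exp_pos _)]
  exact hfin2

lemma tsum_pi_prod (g : ℤ → ℝ≥0∞) (hg : ∑' k, g k ≠ ∞) (m : ℕ) :
    ∑' ξ : Fin m → ℤ, ∏ j, g (ξ j) ≠ ∞ := by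
  induction m with
  | zero => simp
  | succ m ih =>
    rw [← (Fin.consEquiv (fun _ : Fin (m + 1) => ℤ)).tsum_eq, ENNReal.tsum_prod']
    simp only [Fin.consEquiv_apply, Fin.prod_univ_succ, Fin.cons_zero, Fin.cons_succ]
    simp_rw [ENNReal.tsum_mul_left, ENNReal.tsum_mul_right]
    exact ENNReal.mul_ne_top hg ih

lemma tsum_exp_ne_top {s : ℝ} (hs : 0 < s) :
    ∑' ξ : Fin m → ℤ, ENNReal.ofReal (Real.exp (-(s * wt ξ))) ≠ ∞ := by
  have h1 : ∑' k : ℤ, ENNReal.ofReal (Real.exp (-(s * |(k : ℝ)|))) ≠ ∞ := by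
    have hs1 : Summable fun k : ℕ => Real.exp (-(s * |(k : ℝ)|)) := by
      have := Real.summable_exp_nat_mul_iff.2 (neg_lt_zero.2 hs)
      refine this.congr fun k => ?_
      rw [abs_of_nonneg (by positivity)]; ring_nf
    have : Summable fun k : ℤ => Real.exp (-(s * |(k : ℝ)|)) := by
      refine Summable.of_nat_of_neg (by simpa using hs1) (by simpa using hs1)
    exact this.tsum_ofReal_ne_top
  have := tsum_pi_prod _ h1 m
  convert this using 3 with ξ
  rw [← ENNReal.ofReal_prod_of_nonneg (fun _ _ => (Real.exp_pos _).le), ← Real.exp_sum]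
  congr 2
  rw [wt, Finset.mul_sum, Finset.sum_neg_distrib]

theorem fourier_expansion (hm : 1 ≤ m) {f : EuclideanSpace ℝ (Fin m) → ℝ}
    (hf : ∀ x, AnalyticAt ℝ f x) (hper : Per f) :
    ∃ s : ℝ, 0 < s ∧ ∃ a : (Fin m → ℤ) → ℂ, N s a ≠ ∞ ∧ Sym a ∧ ∀ x, ev a x = f x := by
  choose C c hC hc h using coeff_decay hf hper
  have hne : (Finset.univ : Finset (Fin m)).Nonempty := ⟨⟨0, hm⟩, Finset.mem_univ _⟩
  obtain ⟨C', hC'0, hC'⟩ : ∃ C' : ℝ, 0 ≤ C' ∧ ∀ j, C j ≤ C' :=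
    ⟨∑ j, C j, Finset.sum_nonneg fun j _ => hC j, fun j =>
      Finset.single_le_sum (f := C) (fun i _ => hC i) (Finset.mem_univ j)⟩
  obtain ⟨c', hc'0, hc'⟩ : ∃ c' : ℝ, 0 < c' ∧ ∀ j, c' ≤ c j :=
    ⟨Finset.univ.inf' hne c, (Finset.lt_inf'_iff hne).2 fun j _ => hc j, fun j =>
      Finset.inf'_le c (Finset.mem_univ j)⟩
  have hm0 : (0 : ℝ) < m := by exact_mod_cast hm
  set a := UnitAddTorus.mFourierCoeff (fun y : UnitAddTorus (Fin m) => (f (rep y) : ℂ)) with ha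
  have hdec : ∀ ξ, ‖a ξ‖ ≤ C' * Real.exp (-(c' / m * wt ξ)) := by
    intro ξ
    obtain ⟨j, -, hj⟩ := Finset.exists_max_image Finset.univ (fun j => |(ξ j : ℝ)|) hne
    have hw : wt ξ ≤ m * |(ξ j : ℝ)| := by
      unfold wt
      refine (Finset.sum_le_card_nsmul _ _ _ fun i hi => hj i hi).trans ?_
      simp
    refine (h j ξ).trans (mul_le_mul (hC' j) (Real.exp_le_exp.2 (neg_le_neg ?_))
      (Real.exp_pos _).le hC'0)
    calc c' / m * wt ξ ≤ c' / m * (m * |(ξ j : ℝ)|) := by gcongr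
      _ = c' * |(ξ j : ℝ)| := by field_simp
      _ ≤ _ := mul_le_mul_of_nonneg_right (hc' j) (abs_nonneg _)
  set s := c' / m / 2 with hs
  have hs0 : 0 < s := by positivity
  have hN : N s a ≠ ∞ := by
    refine ne_top_of_le_ne_top (ENNReal.mul_ne_top (ENNReal.ofReal_ne_top (r := C'))
      (tsum_exp_ne_top (m := m) hs0)) ?_
    unfold N
    rw [← ENNReal.tsum_mul_left]
    refine ENNReal.tsum_le_tsum fun ξ => ?_
    unfold ew
    rw [← ofReal_norm, ← ENNReal.ofReal_mul (norm_nonneg _), ← ENNReal.ofReal_mul hC'0]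
    refine ENNReal.ofReal_le_ofReal ?_
    refine (mul_le_mul_of_nonneg_right (hdec ξ) (Real.exp_pos _).le).trans (le_of_eq ?_)
    rw [mul_assoc, ← Real.exp_add]
    congr 2
    rw [hs]; ring
  refine ⟨s, hs0, a, hN, ?_, ?_⟩
  · intro ξ
    rw [ha, mFourierCoeff_eq, mFourierCoeff_eq, ← integral_conj]
    refine MeasureTheory.integral_congr_ae (Filter.Eventually.of_forall fun y => ?_)
    simp only [map_mul, Complex.conj_ofReal]
    rw [← UnitAddTorus.mFourier_neg]
  · intro x
    have hcont : Continuous fun x => (f x : ℂ) :=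
      Complex.continuous_ofReal.comp (continuous_iff_continuousAt.2 fun x => (hf x).continuousAt)
    have hperc : Per fun x => (f x : ℂ) := fun x z => by simp only [hper x z]
    let g : C(UnitAddTorus (Fin m), ℂ) := ⟨fun y => (f (rep y) : ℂ), hperc.continuous_rep hcont⟩
    have hsum : Summable (UnitAddTorus.mFourierCoeff g) := (summable_of_N hs0.le hN).of_norm
    have := (UnitAddTorus.hasSum_mFourier_series_apply_of_summable hsum (proj x)).tsum_eq
    have hgx : g (proj x) = f x := hperc.rep x
    rw [hgx] at this
    rw [← this]
    unfold ev
    refine tsum_congr fun ξ => ?_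
    rw [mFourier_proj]; rfl

end fourier
end MEP

namespace MEP
open scoped ENNReal BigOperators NNReal
open Finset

/-! ## Part G : existence -/

section existence
variable {m : ℕ}

lemma exists_arrays {s₀ : ℝ} (hs₀ : 0 < s₀) (a : Option (Fin m) → (Fin m → ℤ) → ℂ)
    (ha : ∀ c, N s₀ (a c) ≠ ∞) (hsym : ∀ c, Sym (a c)) :
    ∃ r s : ℝ, 0 < r ∧ 0 < s ∧ ∃ A : Option (Fin m) → ℕ → (Fin m → ℤ) → ℂ,
      (∀ c, NN r s (A c) ≠ ∞) ∧ (∀ c k, Sym (A c k)) ∧ (∀ c, A c 0 = a c) ∧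
      (dt (A none) + ∑ i, dxA i (mulA (A none) (A (some i))) = 0) ∧
      (∀ j, dt (A (some j)) + ∑ i, mulA (A (some i)) (dxA i (A (some j))) +
        dxA j (fun k => linv (A none k)) = 0) := by
  obtain ⟨u, hu0, hu⟩ := exists_rec a (recG (m := m)) (fun k f g h => recG_congr k f g h)
  have hsymu : ∀ k c, Sym (u k c) := by
    intro k
    induction k using Nat.strong_induction_on with
    | _ k ih =>
      rcases k with _ | k
      · intro c; rw [hu0]; exact hsym c
      · intro c; rw [hu]; exact recG_sym k u (fun i hi => ih i (by omega)) c
  set M : ℝ := 1 + ∑ c, (N s₀ (a c)).toReal with hMdef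
  have hM : 1 ≤ M := by
    have : 0 ≤ ∑ c, (N s₀ (a c)).toReal := Finset.sum_nonneg fun _ _ => ENNReal.toReal_nonneg
    linarith
  have h0 : ∀ c, N s₀ (u 0 c) ≤ ENNReal.ofReal M := by
    intro c
    rw [hu0, ← ENNReal.ofReal_toReal (ha c)]
    refine ENNReal.ofReal_le_ofReal ?_
    have := Finset.single_le_sum (f := fun c => (N s₀ (a c)).toReal)
      (fun _ _ => ENNReal.toReal_nonneg) (Finset.mem_univ c)
    linarith
  have hb := fun k c => N_bound hM u h0 hu k c (s₀ / 2) (by positivity) (by linarith)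
  set B : ℝ := (4 * Real.pi * Real.exp 1 * (m + 1) * M) / (s₀ / 2) with hB
  have hB0 : 0 < B := by
    have := Real.pi_pos
    have : 0 < M := by linarith
    positivity
  have e1 : s₀ - s₀ / 2 = s₀ / 2 := by ring
  rw [e1] at hb
  refine ⟨1 / (8 * B), s₀ / 2, by positivity, by positivity, fun c k => u k c, ?_,
    fun c k => hsymu k c, fun c => by simp only [hu0], ?_, ?_⟩
  · intro c
    have hsum : Summable fun k : ℕ => M * (1 / 2 : ℝ) ^ k := summable_geometric_two.mul_left M
    refine ne_top_of_le_ne_top hsum.tsum_ofReal_ne_top ?_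
    unfold NN
    refine ENNReal.tsum_le_tsum fun k => ?_
    refine (mul_le_mul_right (hb k c) _).trans ?_
    rw [← ENNReal.ofReal_mul (by positivity)]
    refine ENNReal.ofReal_le_ofReal ?_
    have hc : (catalan k : ℝ) ≤ 4 ^ k := by exact_mod_cast catalan_le_four_pow k
    calc (1 / (8 * B)) ^ k * (M * catalan k * B ^ k)
        ≤ (1 / (8 * B)) ^ k * (M * 4 ^ k * B ^ k) := by gcongr
      _ = M * ((1 / (8 * B)) * 4 * B) ^ k := by rw [mul_pow, mul_pow]; ring
      _ = M * (1 / 2) ^ k := by congr 2; field_simp; norm_num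
  · funext k
    have hk : ((k : ℂ) + 1) ≠ 0 := by exact_mod_cast Nat.succ_ne_zero k
    simp only [Pi.add_apply, Finset.sum_apply, dt, dxA, mulA, hu k, recG, Pi.zero_apply]
    rw [smul_smul, show ((k : ℂ) + 1) * -(1 / ((k : ℂ) + 1)) = -1 by field_simp, neg_one_smul]
    exact neg_add_cancel _
  · intro j
    funext k
    have hk : ((k : ℂ) + 1) ≠ 0 := by exact_mod_cast Nat.succ_ne_zero k
    simp only [Pi.add_apply, Finset.sum_apply, dt, dxA, mulA, hu k, recG, Pi.zero_apply]
    rw [smul_smul, show ((k : ℂ) + 1) * -(1 / ((k : ℂ) + 1)) = -1 by field_simp, neg_one_smul,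
      add_assoc]
    exact neg_add_cancel _

lemma lap_linv (w : (Fin m → ℤ) → ℂ) : (∑ i, dx i (dx i (linv w))) + w = linv w := by
  funext ξ
  simp only [Pi.add_apply, Finset.sum_apply, dx, linv]
  have hl : (lam ξ : ℂ) ≠ 0 := by
    exact_mod_cast (zero_lt_one.trans_le (one_le_lam ξ)).ne'
  have e : ∑ i, (2 * Real.pi * Complex.I * (ξ i : ℂ)) * ((2 * Real.pi * Complex.I * (ξ i : ℂ)) *
      ((lam ξ : ℂ)⁻¹ * w ξ)) = (1 - (lam ξ : ℂ)) * ((lam ξ : ℂ)⁻¹ * w ξ) := by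
    have : (1 - (lam ξ : ℂ)) = ∑ i, (2 * Real.pi * Complex.I * (ξ i : ℂ)) *
        (2 * Real.pi * Complex.I * (ξ i : ℂ)) := by
      unfold lam
      push_cast
      rw [Finset.mul_sum, sub_add_cancel_left, ← Finset.sum_neg_distrib]
      refine Finset.sum_congr rfl fun i _ => ?_
      linear_combination (-(4 * (Real.pi : ℂ) ^ 2 * (ξ i) ^ 2)) * Complex.I_mul_I
    rw [this, Finset.sum_mul]
    refine Finset.sum_congr rfl fun i _ => ?_
    ring
  rw [e]
  field_simp
  ring

lemma fderiv_re {r s : ℝ} (hs : 0 < s) {A : ℕ → (Fin m → ℤ) → ℂ}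
    (hA : NN r s A ≠ ∞) {p : ℝ × EuclideanSpace ℝ (Fin m)} (hp : |p.1| < r)
    (w : ℝ × EuclideanSpace ℝ (Fin m)) :
    fderiv ℝ (fun q => (F A q).re) p w = (fderiv ℝ (F A) p w).re := by
  have h1 := (F_hasFDerivAt hs hA hp).1
  have h2 := (Complex.reCLM.hasFDerivAt (x := F A p)).comp p h1
  have h3 : HasFDerivAt (fun q => (F A q).re) (Complex.reCLM.comp (∑' q, dterm A q p)) p := h2
  rw [h3.fderiv, h1.fderiv]
  rfl

lemma vec_decomp (w : EuclideanSpace ℝ (Fin m)) :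
    ((0 : ℝ), w) = ∑ i, w i • ((0 : ℝ), (EuclideanSpace.single i (1 : ℝ) : EuclideanSpace ℝ (Fin m))) := by
  refine Prod.ext ?_ ?_
  · simp [Prod.fst_sum]
  · rw [Prod.snd_sum]
    ext j
    simp [Pi.single_apply]

lemma evt_slab {r : ℝ} {p : ℝ × EuclideanSpace ℝ (Fin m)} (hp : |p.1| < r) :
    ∀ᶠ q in nhds p, |q.1| < r :=
  (continuous_fst.abs.tendsto p).eventually (gt_mem_nhds hp)

theorem existence (hm : 1 ≤ m)
    (n₀ : EuclideanSpace ℝ (Fin m) → ℝ)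
    (v₀ : EuclideanSpace ℝ (Fin m) → EuclideanSpace ℝ (Fin m))
    (hn₀ : ∀ x, AnalyticAt ℝ n₀ x) (hv₀ : ∀ x, AnalyticAt ℝ v₀ x)
    (hn₀p : ∀ (x : EuclideanSpace ℝ (Fin m)) (z : Fin m → ℤ),
      n₀ (x + (WithLp.equiv 2 (Fin m → ℝ)).symm fun i => (z i : ℝ)) = n₀ x)
    (hv₀p : ∀ (x : EuclideanSpace ℝ (Fin m)) (z : Fin m → ℤ),
      v₀ (x + (WithLp.equiv 2 (Fin m → ℝ)).symm fun i => (z i : ℝ)) = v₀ x) :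
    ∃ ε > (0 : ℝ), ∃ (n φ : ℝ × EuclideanSpace ℝ (Fin m) → ℝ)
      (v : ℝ × EuclideanSpace ℝ (Fin m) → EuclideanSpace ℝ (Fin m)),
      IsAnalyticMEPSolution m ε n₀ v₀ n φ v := by
  let f : Option (Fin m) → EuclideanSpace ℝ (Fin m) → ℝ := fun c x =>
    match c with
    | none => n₀ x
    | some j => v₀ x j
  have hf : ∀ c x, AnalyticAt ℝ (f c) x := by
    rintro (_ | j) x
    · exact hn₀ x
    · exact ((EuclideanSpace.proj (𝕜 := ℝ) j : EuclideanSpace ℝ (Fin m) →L[ℝ] ℝ).analyticAt _).comp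
        (hv₀ x)
  have hfp : ∀ c, Per (f c) := by
    rintro (_ | j) x z
    · exact hn₀p x z
    · exact congrArg (fun w : EuclideanSpace ℝ (Fin m) => w j) (hv₀p x z)
  choose sc hsc a haN hasym haev using fun c => fourier_expansion hm (hf c) (hfp c)
  have hne : (Finset.univ : Finset (Option (Fin m))).Nonempty := ⟨none, Finset.mem_univ _⟩
  obtain ⟨s₀, hs₀, hs₀'⟩ : ∃ s₀ : ℝ, 0 < s₀ ∧ ∀ c, s₀ ≤ sc c :=
    ⟨Finset.univ.inf' hne sc, (Finset.lt_inf'_iff hne).2 fun j _ => hsc j, fun j =>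
      Finset.inf'_le sc (Finset.mem_univ j)⟩
  obtain ⟨r, s, hr, hs, A, hAN, hAS, hA0, hP1, hP2⟩ := exists_arrays hs₀ a
    (fun c => ne_top_of_le_ne_top (haN c) (N_mono (hs₀' c) _)) hasym
  set cA : ℕ → (Fin m → ℤ) → ℂ := fun k => linv (A none k) with hcA
  have hcN : NN r s cA ≠ ∞ := by
    refine ne_top_of_le_ne_top (hAN none) ?_
    unfold NN
    exact ENNReal.tsum_le_tsum fun k => mul_le_mul_right (N_linv_le s _) _
  have hcS : ∀ k, Sym (cA k) := fun k => (hAS none k).linv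
  have hpi := Real.pi_pos
  set ε := min (r / 2) (s / (2 * Real.pi)) with hε
  have hε0 : 0 < ε := lt_min (by positivity) (by positivity)
  have hεr : ε ≤ r / 2 := min_le_left _ _
  have hεs : 2 * Real.pi * ε ≤ s := by
    have : ε ≤ s / (2 * Real.pi) := min_le_right _ _
    rw [le_div_iff₀ (by positivity)] at this
    linarith
  have lowS : ∀ {B : ℕ → (Fin m → ℤ) → ℂ} {s' : ℝ}, s' ≤ s → NN r s B ≠ ∞ → NN r s' B ≠ ∞ :=
    fun h hB => ne_top_of_le_ne_top hB (NN_mono hr.le le_rfl h _)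
  have lowR : ∀ {B : ℕ → (Fin m → ℤ) → ℂ} {s' : ℝ}, NN r s' B ≠ ∞ → NN (r / 2) s' B ≠ ∞ :=
    fun hB => ne_top_of_le_ne_top hB (NN_mono (by positivity) (by linarith) le_rfl _)
  have han : ∀ {B : ℕ → (Fin m → ℤ) → ℂ}, NN r s B ≠ ∞ →
      ∀ p : ℝ × EuclideanSpace ℝ (Fin m), |p.1| < ε → AnalyticAt ℝ (fun q => (F B q).re) p := by
    intro B hB p hp
    have h1 : AnalyticAt ℝ (F B) p := F_analyticAt hε0 hs
      (ne_top_of_le_ne_top hB (NN_mono hε0.le (by linarith) le_rfl _)) hεs hp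
    exact (Complex.reCLM.analyticAt (F B p)).comp h1
  have hmulN : ∀ {B C : ℕ → (Fin m → ℤ) → ℂ} {s' : ℝ}, 0 ≤ s' → NN r s' B ≠ ∞ → NN r s' C ≠ ∞ →
      NN r s' (mulA B C) ≠ ∞ := fun h0 h1 h2 =>
    ne_top_of_le_ne_top (ENNReal.mul_ne_top h1 h2) (NN_mulA_le hr.le h0 _ _)
  refine ⟨ε, hε0, fun p => (F (A none) p).re, fun p => (F cA p).re,
    fun p => WithLp.toLp 2 fun j => (F (A (some j)) p).re, ?_, ?_, ?_, ?_, ?_, ?_⟩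
  · intro p hp
    replace hp : |p.1| < _ := abs_lt.2 hp
    refine ⟨han (hAN none) p hp, ?_, han hcN p hp⟩
    have h1 : AnalyticAt ℝ (fun (q : ℝ × EuclideanSpace ℝ (Fin m)) (j : Fin m) =>
        (F (A (some j)) q).re) p := by
      rw [analyticAt_pi_iff]
      exact fun j => han (hAN (some j)) p hp
    exact ((PiLp.continuousLinearEquiv 2 ℝ (fun _ : Fin m => ℝ)).symm.toContinuousLinearMap.analyticAt
      _).comp h1
  · intro t x z
    simp only [F_periodic, and_self]
  · intro p hp
    replace hp : |p.1| < _ := abs_lt.2 hp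
    have hpr : |p.1| < r := by linarith
    have h1 : ∀ i, fderiv ℝ (fun q => (F (A none) q).re * (F (A (some i)) q).re) p
        (0, EuclideanSpace.single i 1) = (F (dxA i (mulA (A none) (A (some i)))) p).re := by
      intro i
      have heq : (fun q => (F (A none) q).re * (F (A (some i)) q).re) =ᶠ[nhds p]
          fun q => (F (mulA (A none) (A (some i))) q).re := by
        filter_upwards [evt_slab hpr] with q hq
        rw [← F_mul hr hs.le (hAN none) (hAN (some i)) hq.le, ← F_real (hAS none) q,
          ← F_real (hAS (some i)) q]
        simp
      rw [heq.fderiv_eq, fderiv_re hs (hmulN hs.le (hAN none) (hAN (some i))) hpr,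
        fderiv_F_x hs (hmulN hs.le (hAN none) (hAN (some i))) hpr]
    have h2 : ∀ i, NN (r / 2) (s / 2) (dxA i (mulA (A none) (A (some i)))) ≠ ∞ := fun i =>
      lowR (NN_dxA (by linarith) i (hmulN hs.le (hAN none) (hAN (some i))))
    have h3 := congrArg (fun B => F B p) hP1
    simp only [F_zero] at h3
    rw [F_add (r := r / 2) (s := s / 2) (by positivity) (by positivity)
      (NN_dt (by positivity) (by linarith) (lowS (by linarith) (hAN none)))
      (NN_sum _ h2) (by linarith), F_sum _ (by positivity) (by positivity) h2 (by linarith)] at h3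
    have h4 := congrArg Complex.re h3
    simp only [Complex.add_re, Complex.re_sum, Complex.zero_re] at h4
    change fderiv ℝ (fun p => (F (A none) p).re) p (1, 0) +
      ∑ i, fderiv ℝ (fun q => (F (A none) q).re * (F (A (some i)) q).re) p
        (0, EuclideanSpace.single i 1) = 0
    rw [fderiv_re hs (hAN none) hpr, fderiv_F_t hs (hAN none) hpr, Finset.sum_congr rfl fun i _ => h1 i]
    exact h4
  · intro p hp j
    replace hp : |p.1| < _ := abs_lt.2 hp
    have hpr : |p.1| < r := by linarith
    have hdx : ∀ i, NN r (s / 2) (dxA i (A (some j))) ≠ ∞ := fun i =>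
      NN_dxA (by linarith) i (hAN (some j))
    have hlow : ∀ c, NN r (s / 2) (A c) ≠ ∞ := fun c => lowS (by linarith) (hAN c)
    have h2 : ∀ i, NN (r / 2) (s / 2) (mulA (A (some i)) (dxA i (A (some j)))) ≠ ∞ := fun i =>
      lowR (hmulN (by positivity) (hlow _) (hdx i))
    have h5 : NN (r / 2) (s / 2) (dxA j cA) ≠ ∞ := lowR (NN_dxA (by linarith) j hcN)
    have h6 : NN (r / 2) (s / 2) (dt (A (some j))) ≠ ∞ :=
      NN_dt (by positivity) (by linarith) (hlow _)
    have h3 := congrArg (fun B => F B p) (hP2 j)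
    simp only [F_zero] at h3
    rw [F_add (r := r / 2) (s := s / 2) (by positivity) (by positivity)
      (NN_add h6 (NN_sum _ h2)) h5 (by linarith),
      F_add (r := r / 2) (s := s / 2) (by positivity) (by positivity) h6 (NN_sum _ h2) (by linarith),
      F_sum _ (by positivity) (by positivity) h2 (by linarith)] at h3
    have h4 := congrArg Complex.re h3
    simp only [Complex.add_re, Complex.re_sum, Complex.zero_re] at h4
    change fderiv ℝ (fun q => (F (A (some j)) q).re) p (1, 0) +
      fderiv ℝ (fun q => (F (A (some j)) q).re) p ((0 : ℝ), WithLp.toLp 2 fun j => (F (A (some j)) p).re)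
        + fderiv ℝ (fun q => (F cA q).re) p (0, EuclideanSpace.single j 1) = 0
    rw [vec_decomp (WithLp.toLp 2 fun j => (F (A (some j)) p).re), map_sum,
      fderiv_re hs (hAN _) hpr, fderiv_F_t hs (hAN _) hpr, fderiv_re hs hcN hpr, fderiv_F_x hs hcN hpr]
    refine Eq.trans ?_ h4
    congr 2
    refine Finset.sum_congr rfl fun i _ => ?_
    rw [map_smul, fderiv_re hs (hAN _) hpr, fderiv_F_x hs (hAN _) hpr,
      ← F_mul hr (by positivity) (hlow _) (hdx i) hpr.le, ← F_real (hAS (some i)) p,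
      ← F_real (A := dxA i (A (some j))) (fun k => (hAS (some j) k).dx i) p]
    simp
  · intro p hp
    replace hp : |p.1| < _ := abs_lt.2 hp
    have hpr : |p.1| < r := by linarith
    have hd1 : ∀ i, NN r (s / 2) (dxA i cA) ≠ ∞ := fun i => NN_dxA (by linarith) i hcN
    have hd2 : ∀ i, NN r (s / 4) (dxA i (dxA i cA)) ≠ ∞ := fun i => NN_dxA (by linarith) i (hd1 i)
    have h1 : ∀ i, fderiv ℝ (fun q => fderiv ℝ (fun q => (F cA q).re) q
        (0, EuclideanSpace.single i 1)) p (0, EuclideanSpace.single i 1) =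
        (F (dxA i (dxA i cA)) p).re := by
      intro i
      have heq : (fun q => fderiv ℝ (fun q => (F cA q).re) q (0, EuclideanSpace.single i 1))
          =ᶠ[nhds p] fun q => (F (dxA i cA) q).re := by
        filter_upwards [evt_slab hpr] with q hq
        rw [fderiv_re hs hcN hq, fderiv_F_x hs hcN hq]
      have hs2 : 0 < s / 2 := by positivity
      rw [heq.fderiv_eq, fderiv_re hs2 (hd1 i) hpr, fderiv_F_x hs2 (hd1 i) hpr]
    have harr : (∑ i, dxA i (dxA i cA)) + A none = cA := by
      funext k
      simp only [Pi.add_apply, Finset.sum_apply, dxA, hcA]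
      exact lap_linv _
    have h3 := congrArg (fun B => F B p) harr
    replace h3 : F ((∑ i, dxA i (dxA i cA)) + A none) p = F cA p := h3
    rw [F_add hr.le (s := s / 4) (by positivity) (NN_sum _ hd2) (lowS (by linarith) (hAN none)) hpr.le,
      F_sum _ hr.le (by positivity) hd2 hpr.le] at h3
    have h4 := congrArg Complex.re h3
    simp only [Complex.add_re, Complex.re_sum] at h4
    simp only [h1]
    linarith
  · intro x
    have hev : ∀ c, (F (A c) (0, x)).re = f c x := by
      intro c
      rw [F_eq_ev hr.le hs.le (hAN c) (by simpa using hr.le), tsum_eq_single 0]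
      · simp [hA0, haev]
      · intro k hk
        simp [hk]
    refine ⟨hev none, ?_⟩
    ext j
    exact hev (some j)

end existence
end MEP

namespace MEP
open scoped ENNReal BigOperators NNReal
open Finset

/-! ## Part F : uniqueness -/

section uniqueness
variable {m : ℕ} {ε : ℝ}

/-- Analytic on the slab. -/
def An (ε : ℝ) (f : ℝ × EuclideanSpace ℝ (Fin m) → ℝ) : Prop :=
  ∀ p : ℝ × EuclideanSpace ℝ (Fin m), p.1 ∈ Set.Ioo (-ε) ε → AnalyticAt ℝ f p

/-- Equality on the slab. -/
def SE (ε : ℝ) (f g : ℝ × EuclideanSpace ℝ (Fin m) → ℝ) : Prop :=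
  ∀ p : ℝ × EuclideanSpace ℝ (Fin m), p.1 ∈ Set.Ioo (-ε) ε → f p = g p

/-- Directional derivative. -/
noncomputable def D (w : ℝ × EuclideanSpace ℝ (Fin m)) (f : ℝ × EuclideanSpace ℝ (Fin m) → ℝ) :
    ℝ × EuclideanSpace ℝ (Fin m) → ℝ := fun p => fderiv ℝ f p w

/-- Spatial direction. -/
noncomputable def sd (i : Fin m) : ℝ × EuclideanSpace ℝ (Fin m) :=
  ((0 : ℝ), EuclideanSpace.single i (1 : ℝ))

/-- Time direction. -/
def td : ℝ × EuclideanSpace ℝ (Fin m) := ((1 : ℝ), 0)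

lemma slab_evt {p : ℝ × EuclideanSpace ℝ (Fin m)} (hp : p.1 ∈ Set.Ioo (-ε) ε) :
    ∀ᶠ q : ℝ × EuclideanSpace ℝ (Fin m) in nhds p, q.1 ∈ Set.Ioo (-ε) ε :=
  (continuous_fst.tendsto p).eventually (isOpen_Ioo.mem_nhds hp)

lemma An.D {f : ℝ × EuclideanSpace ℝ (Fin m) → ℝ} (hf : An ε f)
    (w : ℝ × EuclideanSpace ℝ (Fin m)) : An ε (D w f) := fun p hp =>
  ((ContinuousLinearMap.apply ℝ ℝ w).analyticAt _).comp (hf p hp).fderiv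

lemma An.add {f g : ℝ × EuclideanSpace ℝ (Fin m) → ℝ} (hf : An ε f) (hg : An ε g) :
    An ε (fun p => f p + g p) := fun p hp => (hf p hp).add (hg p hp)

lemma An.sub {f g : ℝ × EuclideanSpace ℝ (Fin m) → ℝ} (hf : An ε f) (hg : An ε g) :
    An ε (fun p => f p - g p) := fun p hp => (hf p hp).sub (hg p hp)

lemma An.neg {f : ℝ × EuclideanSpace ℝ (Fin m) → ℝ} (hf : An ε f) :
    An ε (fun p => -f p) := fun p hp => (hf p hp).neg

lemma An.mul {f g : ℝ × EuclideanSpace ℝ (Fin m) → ℝ} (hf : An ε f) (hg : An ε g) :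
    An ε (fun p => f p * g p) := fun p hp => (hf p hp).mul (hg p hp)

lemma An.sum {ι : Type*} (s : Finset ι) {f : ι → ℝ × EuclideanSpace ℝ (Fin m) → ℝ}
    (hf : ∀ i, An ε (f i)) : An ε (fun p => ∑ i ∈ s, f i p) := fun p hp =>
  Finset.analyticAt_fun_sum s fun i _ => hf i p hp

lemma An.diff {f : ℝ × EuclideanSpace ℝ (Fin m) → ℝ} (hf : An ε f)
    {p : ℝ × EuclideanSpace ℝ (Fin m)} (hp : p.1 ∈ Set.Ioo (-ε) ε) : DifferentiableAt ℝ f p :=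
  (hf p hp).differentiableAt

lemma SE.D {f g : ℝ × EuclideanSpace ℝ (Fin m) → ℝ} (h : SE ε f g)
    (w : ℝ × EuclideanSpace ℝ (Fin m)) : SE ε (D w f) (D w g) := by
  intro p hp
  have : f =ᶠ[nhds p] g := by
    filter_upwards [slab_evt hp] with q hq using h q hq
  simp only [MEP.D, this.fderiv_eq]

lemma D_add {f g : ℝ × EuclideanSpace ℝ (Fin m) → ℝ} (hf : An ε f) (hg : An ε g)
    (w : ℝ × EuclideanSpace ℝ (Fin m)) :
    SE ε (D w fun p => f p + g p) (fun p => D w f p + D w g p) := by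
  intro p hp
  simp only [D]
  rw [fderiv_fun_add (hf.diff hp) (hg.diff hp)]
  rfl

lemma D_sub {f g : ℝ × EuclideanSpace ℝ (Fin m) → ℝ} (hf : An ε f) (hg : An ε g)
    (w : ℝ × EuclideanSpace ℝ (Fin m)) :
    SE ε (D w fun p => f p - g p) (fun p => D w f p - D w g p) := by
  intro p hp
  simp only [D]
  rw [fderiv_fun_sub (hf.diff hp) (hg.diff hp)]
  rfl

lemma D_neg (f : ℝ × EuclideanSpace ℝ (Fin m) → ℝ) (w : ℝ × EuclideanSpace ℝ (Fin m)) :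
    (D w fun p => -f p) = (fun p => -D w f p) := by
  funext p
  simp only [D]
  rw [fderiv_fun_neg]
  rfl

lemma D_mul {f g : ℝ × EuclideanSpace ℝ (Fin m) → ℝ} (hf : An ε f) (hg : An ε g)
    (w : ℝ × EuclideanSpace ℝ (Fin m)) :
    SE ε (D w fun p => f p * g p) (fun p => D w f p * g p + f p * D w g p) := by
  intro p hp
  simp only [D]
  rw [fderiv_fun_mul (hf.diff hp) (hg.diff hp)]
  simp
  ring

lemma D_sum {ι : Type*} (s : Finset ι) {f : ι → ℝ × EuclideanSpace ℝ (Fin m) → ℝ}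
    (hf : ∀ i, An ε (f i)) (w : ℝ × EuclideanSpace ℝ (Fin m)) :
    SE ε (D w fun p => ∑ i ∈ s, f i p) (fun p => ∑ i ∈ s, D w (f i) p) := by
  intro p hp
  simp only [D]
  rw [fderiv_fun_sum (fun i _ => (hf i).diff hp)]
  simp

lemma D_comm {f : ℝ × EuclideanSpace ℝ (Fin m) → ℝ} (hf : An ε f)
    (w w' : ℝ × EuclideanSpace ℝ (Fin m)) : SE ε (D w (D w' f)) (D w' (D w f)) := by
  intro p hp
  have key : ∀ a b, D a (D b f) p = fderiv ℝ (fderiv ℝ f) p a b := by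
    intro a b
    have h1 : DifferentiableAt ℝ (fderiv ℝ f) p := (hf p hp).fderiv.differentiableAt
    have h2 := (ContinuousLinearMap.apply ℝ ℝ b).hasFDerivAt.comp p h1.hasFDerivAt
    have h3 : HasFDerivAt (D b f)
      ((ContinuousLinearMap.apply ℝ ℝ b).comp (fderiv ℝ (fderiv ℝ f) p)) p := h2
    simp only [D] at h3 ⊢
    rw [h3.fderiv]
    rfl
  rw [key, key]
  exact (hf p hp).contDiffAt.isSymmSndFDerivAt_of_omega _ _

/-- Derivative along a line. -/
lemma line_deriv {f : ℝ × EuclideanSpace ℝ (Fin m) → ℝ} (hf : An ε f)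
    (p w : ℝ × EuclideanSpace ℝ (Fin m)) (s : ℝ) (hs : (p + s • w).1 ∈ Set.Ioo (-ε) ε) :
    HasDerivAt (fun s : ℝ => f (p + s • w)) (D w f (p + s • w)) s := by
  have h1 : HasDerivAt (fun s : ℝ => p + s • w) w s := by
    simpa using ((hasDerivAt_id s).smul_const w).const_add p
  exact (hf.diff hs).hasFDerivAt.comp_hasDerivAt s h1

/-- Vanishing of order `k` in time at `t = 0`. -/
def Van : ℕ → (ℝ × EuclideanSpace ℝ (Fin m) → ℝ) → Prop
  | 0, _ => True
  | k + 1, f => (∀ x, f (0, x) = 0) ∧ Van k (D td f)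

lemma Van.congr (hε : 0 < ε) : ∀ (k : ℕ) {f g : ℝ × EuclideanSpace ℝ (Fin m) → ℝ},
    SE ε f g → Van k g → Van k f
  | 0, _, _, _, _ => trivial
  | k + 1, _, _, h, hg => ⟨fun x => (h (0, x) (by simpa using hε)).trans (hg.1 x),
      Van.congr hε k (h.D td) hg.2⟩

lemma Van.mono : ∀ (k : ℕ) {f : ℝ × EuclideanSpace ℝ (Fin m) → ℝ}, Van (k + 1) f → Van k f
  | 0, _, _ => trivial
  | k + 1, _, h => ⟨h.1, Van.mono k h.2⟩

lemma Van.add (hε : 0 < ε) : ∀ (k : ℕ) {f g : ℝ × EuclideanSpace ℝ (Fin m) → ℝ},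
    An ε f → An ε g → Van k f → Van k g → Van k (fun p => f p + g p)
  | 0, _, _, _, _, _, _ => trivial
  | k + 1, _, _, hf, hg, h1, h2 => ⟨fun x => by simp only [h1.1 x, h2.1 x, add_zero],
      Van.congr hε k (D_add hf hg td) (Van.add hε k (hf.D td) (hg.D td) h1.2 h2.2)⟩

lemma Van.neg : ∀ (k : ℕ) {f : ℝ × EuclideanSpace ℝ (Fin m) → ℝ},
    Van k f → Van k (fun p => -f p)
  | 0, _, _ => trivial
  | k + 1, f, h1 => ⟨fun x => by simp only [h1.1 x, neg_zero],
      by rw [D_neg]; exact Van.neg k h1.2⟩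

lemma Van.zero : ∀ (k : ℕ), Van k (fun _ : ℝ × EuclideanSpace ℝ (Fin m) => (0 : ℝ))
  | 0 => trivial
  | k + 1 => ⟨fun _ => rfl, by
      have : D td (fun _ : ℝ × EuclideanSpace ℝ (Fin m) => (0 : ℝ)) = fun _ => 0 := by
        funext p; simp [D]
      rw [this]; exact Van.zero k⟩

lemma Van.sum (hε : 0 < ε) (k : ℕ) {ι : Type*} (s : Finset ι)
    {f : ι → ℝ × EuclideanSpace ℝ (Fin m) → ℝ}
    (hf : ∀ i, An ε (f i)) (h : ∀ i, Van k (f i)) : Van k (fun p => ∑ i ∈ s, f i p) := by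
  classical
  induction s using Finset.induction_on with
  | empty => simpa using Van.zero k
  | insert a s ha ih =>
    simp only [Finset.sum_insert ha]
    exact Van.add hε k (hf a) (An.sum s hf) (h a) ih

lemma Van.mul (hε : 0 < ε) : ∀ (k : ℕ) {f g : ℝ × EuclideanSpace ℝ (Fin m) → ℝ},
    An ε f → An ε g → Van k f → Van k (fun p => f p * g p)
  | 0, _, _, _, _, _ => trivial
  | k + 1, _, _, hf, hg, h1 => ⟨fun x => by simp only [h1.1 x, zero_mul],
      Van.congr hε k (D_mul hf hg td) (Van.add hε k ((hf.D td).mul hg) (hf.mul (hg.D td))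
        (Van.mul hε k (hf.D td) hg h1.2) (Van.mul hε k hf (hg.D td) (Van.mono k h1)))⟩

lemma Van.X (hε : 0 < ε) (i : Fin m) : ∀ (k : ℕ) {f : ℝ × EuclideanSpace ℝ (Fin m) → ℝ},
    An ε f → Van k f → Van k (D (sd i) f)
  | 0, _, _, _ => trivial
  | k + 1, f, hf, h1 => ⟨fun x => by
      have h := line_deriv hf (0, x) (sd i) 0 (by simpa using hε)
      have h2 : (fun s : ℝ => f ((0, x) + s • sd i)) = fun _ => 0 := by
        funext s
        have : ((0 : ℝ), x) + s • sd i = (0, x + s • EuclideanSpace.single i (1 : ℝ)) := by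
          refine Prod.ext ?_ rfl
          simp [sd]
        rw [this]
        exact h1.1 _
      rw [h2] at h
      have h3 := h.unique (hasDerivAt_const (0 : ℝ) (0 : ℝ))
      simpa using h3,
      Van.congr hε k (D_comm hf td (sd i)) (Van.X hε i k (hf.D td) h1.2)⟩

/-- `Δ Φ - Φ + N = 0` on the slab. -/
def Ell (ε : ℝ) (Φ f : ℝ × EuclideanSpace ℝ (Fin m) → ℝ) : Prop :=
  SE ε (fun p => ∑ i, D (sd i) (D (sd i) Φ) p - Φ p + f p) (fun _ => 0)

/-- Periodicity on the slab. -/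
def PerS (ε : ℝ) (Φ : ℝ × EuclideanSpace ℝ (Fin m) → ℝ) : Prop :=
  ∀ z : Fin m → ℤ, SE ε (fun p => Φ (p.1, p.2 + ivec z)) Φ

lemma PerS.D {Φ : ℝ × EuclideanSpace ℝ (Fin m) → ℝ} (h : PerS ε Φ)
    (w : ℝ × EuclideanSpace ℝ (Fin m)) : PerS ε (D w Φ) := by
  intro z p hp
  have h1 := (h z).D w p hp
  rw [← h1]
  have h2 : (fun p : ℝ × EuclideanSpace ℝ (Fin m) => Φ (p.1, p.2 + ivec z)) =
      fun p => Φ (p + ((0 : ℝ), ivec z)) := by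
    funext q
    congr 1
    refine Prod.ext ?_ rfl
    simp
  simp only [MEP.D, h2]
  rw [fderiv_comp_add_right]
  congr 2
  refine Prod.ext ?_ rfl
  simp

lemma Ell.T {Φ f : ℝ × EuclideanSpace ℝ (Fin m) → ℝ} (hΦ : An ε Φ) (hf : An ε f)
    (h : Ell ε Φ f) : Ell ε (D td Φ) (D td f) := by
  intro p hp
  have h1 := h.D td p hp
  have hXX : ∀ i, An ε (D (sd i) (D (sd i) Φ)) := fun i => (hΦ.D _).D _
  have hA : An ε (fun p => ∑ i, D (sd i) (D (sd i) Φ) p) := An.sum _ hXX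
  have e1 := D_add (hA.sub hΦ) hf td p hp
  have e2 := D_sub hA hΦ td p hp
  have e3 := D_sum Finset.univ hXX td p hp
  have h0 : D td (fun _ : ℝ × EuclideanSpace ℝ (Fin m) => (0 : ℝ)) p = 0 := by simp [D]
  have e4 : ∑ i, D td (D (sd i) (D (sd i) Φ)) p = ∑ i, D (sd i) (D (sd i) (D td Φ)) p := by
    refine Finset.sum_congr rfl fun i _ => ?_
    rw [D_comm (hΦ.D _) td (sd i) p hp]
    exact ((D_comm hΦ td (sd i)).D (sd i)) p hp
  simp only at e1 e2 e3 h1 ⊢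
  linarith

lemma second_deriv_max {g g1 : ℝ → ℝ} {c : ℝ} (h1 : ∀ s, HasDerivAt g (g1 s) s)
    (h2 : HasDerivAt g1 c 0) (hmax : IsLocalMax g 0) : c ≤ 0 := by
  by_contra! hc
  have hd : deriv g = g1 := funext fun s => (h1 s).deriv
  have hz : deriv g 0 = 0 := hmax.deriv_eq_zero
  have hmin : IsLocalMin g 0 :=
    isLocalMin_of_deriv_deriv_pos (by rw [hd, h2.deriv]; exact hc) hz (h1 0).continuousAt
  have he : g =ᶠ[nhds 0] fun _ => g 0 := by
    filter_upwards [hmax, hmin] with s ha hb using le_antisymm ha hb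
  have he2 := he.deriv
  have he3 := he2.deriv_eq
  rw [hd, h2.deriv] at he3
  simp at he3
  exact hc.ne' he3

lemma max_principle (hε : 0 < ε) {Φ f : ℝ × EuclideanSpace ℝ (Fin m) → ℝ} (hΦ : An ε Φ)
    (hper : PerS ε Φ) (h : Ell ε Φ f) (hf : ∀ x, f (0, x) = 0) (x : EuclideanSpace ℝ (Fin m)) :
    Φ (0, x) ≤ 0 := by
  have h0 : (0 : ℝ) ∈ Set.Ioo (-ε) ε := by simpa using hε
  have hP : Per (fun x => Φ (0, x)) := fun x z => hper z (0, x) h0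
  have hc : Continuous fun x => Φ (0, x) := by
    rw [continuous_iff_continuousAt]
    intro y
    exact (hΦ.diff (p := (0, y)) h0).continuousAt.comp (f := fun x => ((0 : ℝ), x))
      (Continuous.prodMk_right (0 : ℝ)).continuousAt
  obtain ⟨y, -, hy⟩ := (cube_compact (m := m)).exists_isMaxOn ⟨_, rep_mem_cube (proj x)⟩
    hc.continuousOn
  have hmax : ∀ x, Φ (0, x) ≤ Φ (0, y) := by
    intro x
    have e := hP.rep x
    replace e : Φ (0, rep (proj x)) = Φ (0, x) := e
    rw [← e]
    exact hy (rep_mem_cube (proj x))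
  refine (hmax x).trans ?_
  have hEq := h (0, y) h0
  simp only [hf, add_zero] at hEq
  have hle : ∀ i, D (sd i) (D (sd i) Φ) (0, y) ≤ 0 := by
    intro i
    have hline : ∀ s : ℝ, ((0 : ℝ), y) + s • sd i =
        (0, y + s • EuclideanSpace.single i (1 : ℝ)) := by
      intro s
      refine Prod.ext ?_ rfl
      simp [sd]
    have hmem : ∀ s : ℝ, (((0 : ℝ), y) + s • sd i).1 ∈ Set.Ioo (-ε) ε := fun s => by
      rw [hline]; exact h0
    have hb := line_deriv (hΦ.D (sd i)) (0, y) (sd i) 0 (hmem 0)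
    rw [zero_smul, add_zero] at hb
    refine second_deriv_max (fun s => line_deriv hΦ (0, y) (sd i) s (hmem s)) hb ?_
    refine Filter.Eventually.of_forall fun s => ?_
    simp only [zero_smul, add_zero]
    rw [hline]
    exact hmax _
  have := Finset.sum_nonpos fun i (_ : i ∈ (Finset.univ : Finset (Fin m))) => hle i
  linarith

lemma Van.ell (hε : 0 < ε) : ∀ (k : ℕ) {Φ f : ℝ × EuclideanSpace ℝ (Fin m) → ℝ},
    An ε Φ → An ε f → PerS ε Φ → Ell ε Φ f → Van k f → Van k Φ
  | 0, _, _, _, _, _, _, _ => trivial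
  | k + 1, Φ, f, hΦ, hf, hp, he, h => ⟨fun x => by
      refine le_antisymm (max_principle hε hΦ hp he h.1 x) ?_
      have h1 := max_principle hε (Φ := fun p => -Φ p) (f := fun p => -f p) hΦ.neg
        (fun z p hq => congrArg Neg.neg (hp z p hq)) (by
          intro p hq
          have := he p hq
          simp only [D_neg] at this ⊢
          rw [Finset.sum_neg_distrib]
          linarith) (fun x => by simp only [h.1 x, neg_zero]) x
      linarith,
      Van.ell hε k (hΦ.D td) (hf.D td) (hp.D td) (he.T hΦ hf) h.2⟩

lemma Van.iter {x : EuclideanSpace ℝ (Fin m)} : ∀ (k : ℕ)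
    {f : ℝ × EuclideanSpace ℝ (Fin m) → ℝ}, Van (k + 1) f → ((D td)^[k] f) (0, x) = 0
  | 0, _, h => h.1 x
  | k + 1, f, h => by
      rw [Function.iterate_succ_apply]
      exact Van.iter k h.2

lemma An.iter {f : ℝ × EuclideanSpace ℝ (Fin m) → ℝ} (hf : An ε f) (k : ℕ) :
    An ε ((MEP.D td)^[k] f) := by
  induction k with
  | zero => exact hf
  | succ k ih => rw [Function.iterate_succ_apply']; exact ih.D td

lemma Van.eq_zero (hε : 0 < ε) {f : ℝ × EuclideanSpace ℝ (Fin m) → ℝ} (hf : An ε f)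
    (h : ∀ k, Van k f) : SE ε f (fun _ => 0) := by
  rintro ⟨t, x⟩ ht
  have hana : AnalyticOnNhd ℝ (fun s : ℝ => f (s, x)) (Set.Ioo (-ε) ε) := by
    intro s hs
    exact (hf (s, x) hs).comp (f := fun s : ℝ => (s, x)) (analyticAt_id.prod analyticAt_const)
  have hd : ∀ (g : ℝ × EuclideanSpace ℝ (Fin m) → ℝ), An ε g → ∀ s ∈ Set.Ioo (-ε) ε,
      HasDerivAt (fun s : ℝ => g (s, x)) (D td g (s, x)) s := by
    intro g hg s hs
    have e : ∀ s : ℝ, ((0 : ℝ), x) + s • td = (s, x) := by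
      intro s
      refine Prod.ext ?_ ?_ <;> simp [td]
    have := line_deriv hg (0, x) td s (by rw [e]; exact hs)
    simpa only [e] using this
  have hit : ∀ k, ∀ s ∈ Set.Ioo (-ε) ε,
      iteratedDeriv k (fun s : ℝ => f (s, x)) s = ((D td)^[k] f) (s, x) := by
    intro k
    induction k with
    | zero => intro s _; simp
    | succ k ih =>
      intro s hs
      rw [iteratedDeriv_succ, Function.iterate_succ_apply']
      have : iteratedDeriv k (fun s : ℝ => f (s, x)) =ᶠ[nhds s]
          fun s => ((D td)^[k] f) (s, x) := by
        filter_upwards [isOpen_Ioo.mem_nhds hs] with u hu using ih u hu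
      rw [this.deriv_eq]
      exact (hd _ (hf.iter k) s hs).deriv
  have h0 : (0 : ℝ) ∈ Set.Ioo (-ε) ε := by simpa using hε
  have htop : analyticOrderAt (fun s : ℝ => f (s, x)) 0 = ⊤ := by
    refine ENat.eq_top_iff_forall_ge.2 fun k => ?_
    refine (natCast_le_analyticOrderAt_iff_iteratedDeriv_eq_zero (hana 0 h0)).2 fun i _ => ?_
    rw [hit i 0 h0]
    exact Van.iter i (h _)
  have hev := analyticOrderAt_eq_top.1 htop
  exact hana.eqOn_zero_of_preconnected_of_eventuallyEq_zero isPreconnected_Ioo h0 hev ht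

theorem uniqueness (hε : 0 < ε) {n₀ : EuclideanSpace ℝ (Fin m) → ℝ}
    {v₀ : EuclideanSpace ℝ (Fin m) → EuclideanSpace ℝ (Fin m)}
    {n φ n' φ' : ℝ × EuclideanSpace ℝ (Fin m) → ℝ}
    {v v' : ℝ × EuclideanSpace ℝ (Fin m) → EuclideanSpace ℝ (Fin m)}
    (hs : IsAnalyticMEPSolution m ε n₀ v₀ n φ v)
    (hs' : IsAnalyticMEPSolution m ε n₀ v₀ n' φ' v')
    (p : ℝ × EuclideanSpace ℝ (Fin m)) (hp : p.1 ∈ Set.Ioo (-ε) ε) :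
    n' p = n p ∧ v' p = v p := by
  obtain ⟨ha, hper, h1, h2, h3, h4⟩ := hs
  obtain ⟨ha', hper', h1', h2', h3', h4'⟩ := hs'
  have hn : An ε n := fun p hp => (ha p hp).1
  have hn' : An ε n' := fun p hp => (ha' p hp).1
  have hφ : An ε φ := fun p hp => (ha p hp).2.2
  have hφ' : An ε φ' := fun p hp => (ha' p hp).2.2
  have hv : ∀ j, An ε (fun q => v q j) := fun j p hp =>
    ((EuclideanSpace.proj (𝕜 := ℝ) j : EuclideanSpace ℝ (Fin m) →L[ℝ] ℝ).analyticAt _).comp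
      (ha p hp).2.1
  have hv' : ∀ j, An ε (fun q => v' q j) := fun j p hp =>
    ((EuclideanSpace.proj (𝕜 := ℝ) j : EuclideanSpace ℝ (Fin m) →L[ℝ] ℝ).analyticAt _).comp
      (ha' p hp).2.1
  have hadv : ∀ (f : ℝ × EuclideanSpace ℝ (Fin m) → ℝ) (p : ℝ × EuclideanSpace ℝ (Fin m))
      (w : EuclideanSpace ℝ (Fin m)),
      fderiv ℝ f p ((0 : ℝ), w) = ∑ i, w i * D (sd i) f p := by
    intro f p w
    have hw : ((0 : ℝ), w) = ∑ i, w i • sd i := by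
      refine Prod.ext ?_ ?_
      · simp [Prod.fst_sum, sd]
      · rw [Prod.snd_sum]
        ext j
        simp [Pi.single_apply, sd]
    rw [hw, map_sum]
    refine Finset.sum_congr rfl fun i _ => ?_
    rw [map_smul]
    rfl
  -- the differences
  let Nd : ℝ × EuclideanSpace ℝ (Fin m) → ℝ := fun q => n' q - n q
  let Vd : Fin m → ℝ × EuclideanSpace ℝ (Fin m) → ℝ := fun j q => v' q j - v q j
  let Pd : ℝ × EuclideanSpace ℝ (Fin m) → ℝ := fun q => φ' q - φ q
  have hN : An ε Nd := hn'.sub hn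
  have hV : ∀ j, An ε (Vd j) := fun j => (hv' j).sub (hv j)
  have hP : An ε Pd := hφ'.sub hφ
  have hPper : PerS ε Pd := by
    intro z p _
    have e1 := (hper p.1 p.2 z).2.2
    have e2 := (hper' p.1 p.2 z).2.2
    change φ' (p.1, p.2 + ivec z) - φ (p.1, p.2 + ivec z) = φ' p - φ p
    exact congrArg₂ (· - ·) e2 e1
  have hell : Ell ε Pd Nd := by
    intro p hp
    have e1 := h3 p hp
    have e2 := h3' p hp
    have e3 : ∀ i, D (sd i) (D (sd i) Pd) p = D (sd i) (D (sd i) φ') p - D (sd i) (D (sd i) φ) p := by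
      intro i
      rw [((D_sub hφ' hφ (sd i)).D (sd i)) p hp]
      exact D_sub (hφ'.D _) (hφ.D _) (sd i) p hp
    change ∑ i, D (sd i) (D (sd i) φ) p - φ p + n p = 0 at e1
    change ∑ i, D (sd i) (D (sd i) φ') p - φ' p + n' p = 0 at e2
    change ∑ i, D (sd i) (D (sd i) Pd) p - (φ' p - φ p) + (n' p - n p) = 0
    simp only [e3, Finset.sum_sub_distrib]
    linarith
  have hsumN : ∀ i, An ε (fun q => Nd q * v q i + Vd i q * n' q) := fun i =>
    (hN.mul (hv i)).add ((hV i).mul hn')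
  have eqN : SE ε (D td Nd) (fun q => -∑ i, D (sd i) (fun q => Nd q * v q i + Vd i q * n' q) q) := by
    intro p hp
    have e1 := h1 p hp
    have e2 := h1' p hp
    have e3 := D_sub hn' hn td p hp
    have e4 : ∀ i, D (sd i) (fun q => Nd q * v q i + Vd i q * n' q) p =
        D (sd i) (fun q => n' q * v' q i) p - D (sd i) (fun q => n q * v q i) p := by
      intro i
      refine Eq.trans ?_ (D_sub (hn'.mul (hv' i)) (hn.mul (hv i)) (sd i) p hp)
      congr 1
      funext q
      simp only [Nd, Vd]
      ring
    change D td n p + ∑ i, D (sd i) (fun q => n q * v q i) p = 0 at e1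
    change D td n' p + ∑ i, D (sd i) (fun q => n' q * v' q i) p = 0 at e2
    change D td Nd p = D td n' p - D td n p at e3
    simp only [e4, Finset.sum_sub_distrib]
    linarith
  have hsumV : ∀ j i, An ε (fun q => Vd i q * D (sd i) (fun q => v' q j) q +
      D (sd i) (Vd j) q * v q i) := fun j i =>
    ((hV i).mul ((hv' j).D _)).add (((hV j).D _).mul (hv i))
  have eqV : ∀ j, SE ε (D td (Vd j)) (fun q => -((∑ i, (Vd i q * D (sd i) (fun q => v' q j) q +
      D (sd i) (Vd j) q * v q i)) + D (sd j) Pd q)) := by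
    intro j p hp
    have e1 := h2 p hp j
    have e2 := h2' p hp j
    rw [hadv] at e1 e2
    have e3 := D_sub (hv' j) (hv j) td p hp
    have e5 := D_sub hφ' hφ (sd j) p hp
    have e4 : ∀ i, Vd i p * D (sd i) (fun q => v' q j) p + D (sd i) (Vd j) p * v p i =
        v' p i * D (sd i) (fun q => v' q j) p - v p i * D (sd i) (fun q => v q j) p := by
      intro i
      have e6 : D (sd i) (Vd j) p = D (sd i) (fun q => v' q j) p - D (sd i) (fun q => v q j) p :=
        D_sub (hv' j) (hv j) (sd i) p hp
      rw [e6]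
      simp only [Vd]
      ring
    change D td (fun q => v q j) p + _ + D (sd j) φ p = 0 at e1
    change D td (fun q => v' q j) p + _ + D (sd j) φ' p = 0 at e2
    change D td (Vd j) p = D td (fun q => v' q j) p - D td (fun q => v q j) p at e3
    change D (sd j) Pd p = D (sd j) φ' p - D (sd j) φ p at e5
    simp only [e4, Finset.sum_sub_distrib]
    linarith
  have hN0 : ∀ x, Nd (0, x) = 0 := fun x => by
    simp only [Nd, (h4 x).1, (h4' x).1, sub_self]
  have hV0 : ∀ j x, Vd j (0, x) = 0 := fun j x => by
    simp only [Vd, (h4 x).2, (h4' x).2, sub_self]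
  have main : ∀ k, Van k Nd ∧ ∀ j, Van k (Vd j) := by
    intro k
    induction k with
    | zero => exact ⟨trivial, fun _ => trivial⟩
    | succ k ih =>
      obtain ⟨ihN, ihV⟩ := ih
      have ihP : Van k Pd := Van.ell hε k hP hN hPper hell ihN
      refine ⟨⟨hN0, Van.congr hε k eqN ?_⟩, fun j => ⟨hV0 j, Van.congr hε k (eqV j) ?_⟩⟩
      · refine Van.neg k (Van.sum hε k _ (fun i => (hsumN i).D _) fun i => ?_)
        exact Van.X hε i k (hsumN i) (Van.add hε k (hN.mul (hv i)) ((hV i).mul hn')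
          (Van.mul hε k hN (hv i) ihN) (Van.mul hε k (hV i) hn' (ihV i)))
      · refine Van.neg k (Van.add hε k (An.sum _ (hsumV j)) (hP.D _)
          (Van.sum hε k _ (hsumV j) fun i => ?_) (Van.X hε j k hP ihP))
        exact Van.add hε k ((hV i).mul ((hv' j).D _)) (((hV j).D _).mul (hv i))
          (Van.mul hε k (hV i) ((hv' j).D _) (ihV i))
          (Van.mul hε k ((hV j).D _) (hv i) (Van.X hε i k (hV j) (ihV j)))
  refine ⟨sub_eq_zero.1 (Van.eq_zero hε hN (fun k => (main k).1) p hp), ?_⟩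
  ext j
  exact sub_eq_zero.1 (Van.eq_zero hε (hV j) (fun k => (main k).2 j) p hp)

end uniqueness
end MEP

/-- Cauchy–Kowalevski type theorem for the modified Euler–Poisson equation:
for real-analytic `ℤ^m`-periodic initial data `(n₀, v₀)` there exist `ε > 0` and a
solution `(n, v, φ)` of the system `∂ₜn + div(nv) = 0`, `∂ₜv + (v·∇)v + grad φ = 0`,
`Δφ − φ + n = 0`, real-analytic in `(t, x)` on `(−ε, ε) × ℝ^m` and `ℤ^m`-periodic
in `x`, taking the initial data `(n₀, v₀)` at `t = 0`; moreover the pair `(n, v)`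
is unique among such real-analytic solutions. -/
theorem mEP_analytic_regularity (m : ℕ) (hm : 1 ≤ m)
    (n₀ : EuclideanSpace ℝ (Fin m) → ℝ)
    (v₀ : EuclideanSpace ℝ (Fin m) → EuclideanSpace ℝ (Fin m))
    (hn₀ : ∀ x, AnalyticAt ℝ n₀ x) (hv₀ : ∀ x, AnalyticAt ℝ v₀ x)
    (hn₀p : ∀ (x : EuclideanSpace ℝ (Fin m)) (z : Fin m → ℤ),
      n₀ (x + (WithLp.equiv 2 (Fin m → ℝ)).symm fun i => (z i : ℝ)) = n₀ x)
    (hv₀p : ∀ (x : EuclideanSpace ℝ (Fin m)) (z : Fin m → ℤ),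
      v₀ (x + (WithLp.equiv 2 (Fin m → ℝ)).symm fun i => (z i : ℝ)) = v₀ x) :
    ∃ ε > (0 : ℝ), ∃ (n φ : ℝ × EuclideanSpace ℝ (Fin m) → ℝ)
      (v : ℝ × EuclideanSpace ℝ (Fin m) → EuclideanSpace ℝ (Fin m)),
      IsAnalyticMEPSolution m ε n₀ v₀ n φ v ∧
      ∀ (n' φ' : ℝ × EuclideanSpace ℝ (Fin m) → ℝ)
        (v' : ℝ × EuclideanSpace ℝ (Fin m) → EuclideanSpace ℝ (Fin m)),
        IsAnalyticMEPSolution m ε n₀ v₀ n' φ' v' →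
        ∀ p : ℝ × EuclideanSpace ℝ (Fin m), p.1 ∈ Set.Ioo (-ε) ε →
          n' p = n p ∧ v' p = v p := by
  obtain ⟨ε, hε, n, φ, v, h⟩ := MEP.existence hm n₀ v₀ hn₀ hv₀ hn₀p hv₀p
  exact ⟨ε, hε, n, φ, v, h, fun n' φ' v' h' p hp => MEP.uniqueness hε h h' p hp⟩
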